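/- Let H be a real-analytic hypersurface in an open set U ⊆ ℂⁿ (n ≥ 2) that is curve-supported from two sides at a point p ∈ H. Then there exists an open neighborhood Ω of p in ℂⁿ such that for every open set W ⊆ ℂⁿ with H ⊆ W and every holomorphic function f : W → ℂ, there exists a holomorphic function F : Ω → ℂ with F(z) = f(z) for all z ∈ Ω ∩ H. -/

import Mathlib

open Metric

noncomputable section

/-- `H` is a (singular) real-analytic hypersurface in the open set `U ⊆ ℂⁿ`:
`H = {z ∈ U : ρ z = 0}` for some real-analytic `ρ : U → ℝ` (analytic over `ℝ`),
`H` nonempty, and `ρ` does not vanish identically on any connected component of `U`. -/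
def IsRealAnalyticHypersurface {n : ℕ} (U H : Set (EuclideanSpace ℂ (Fin n))) : Prop :=
  IsOpen U ∧ H.Nonempty ∧
    ∃ ρ : EuclideanSpace ℂ (Fin n) → ℝ,
      AnalyticOnNhd ℝ ρ U ∧
      H = {z | z ∈ U ∧ ρ z = 0} ∧
      ∀ z ∈ U, ∃ w ∈ connectedComponentIn U z, ρ w ≠ 0

/-- `C = φ '' 𝔻` is a support curve for `H` at `p`, parametrized by the nonconstant
holomorphic map `φ : 𝔻 → U` with `φ 0 = p` and `C ∩ H = {p}`. -/
def IsSupportCurveVia {n : ℕ} (U H : Set (EuclideanSpace ℂ (Fin n)))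
    (p : EuclideanSpace ℂ (Fin n)) (φ : ℂ → EuclideanSpace ℂ (Fin n))
    (C : Set (EuclideanSpace ℂ (Fin n))) : Prop :=
  DifferentiableOn ℂ φ (ball 0 1) ∧
  Set.MapsTo φ (ball 0 1) U ∧
  (∃ a ∈ ball (0 : ℂ) 1, ∃ b ∈ ball (0 : ℂ) 1, φ a ≠ φ b) ∧
  φ 0 = p ∧
  C = φ '' ball 0 1 ∧
  C ∩ H = {p}

/-- `C` is a support curve for `H` at `p`. -/
def IsSupportCurve {n : ℕ} (U H : Set (EuclideanSpace ℂ (Fin n)))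
    (p : EuclideanSpace ℂ (Fin n)) (C : Set (EuclideanSpace ℂ (Fin n))) : Prop :=
  ∃ φ : ℂ → EuclideanSpace ℂ (Fin n), IsSupportCurveVia U H p φ C

/-- `V` is a connected component of `U \ H`. -/
def IsComponentOfComplement {n : ℕ} (U H V : Set (EuclideanSpace ℂ (Fin n))) : Prop :=
  ∃ x ∈ U \ H, V = connectedComponentIn (U \ H) x

/-- `H` is curve-supported from two sides at `p`: there are two support curves at `p`
lying (off `p`) in two distinct connected components of `U \ H`. -/
def CurveSupportedFromTwoSides {n : ℕ} (U H : Set (EuclideanSpace ℂ (Fin n)))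
    (p : EuclideanSpace ℂ (Fin n)) : Prop :=
  ∃ C₁ C₂ V₁ V₂ : Set (EuclideanSpace ℂ (Fin n)),
    IsSupportCurve U H p C₁ ∧ IsSupportCurve U H p C₂ ∧
    IsComponentOfComplement U H V₁ ∧ IsComponentOfComplement U H V₂ ∧
    V₁ ≠ V₂ ∧ C₁ \ {p} ⊆ V₁ ∧ C₂ \ {p} ⊆ V₂

/-- `ψ` is an analytic disc attached to `S`: a nonconstant continuous map on the closed
unit disc, holomorphic on the open unit disc, with boundary values in `S`. -/
def IsAttachedDisc {n : ℕ} (S : Set (EuclideanSpace ℂ (Fin n)))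
    (ψ : ℂ → EuclideanSpace ℂ (Fin n)) : Prop :=
  ContinuousOn ψ (closedBall 0 1) ∧
  DifferentiableOn ℂ ψ (ball 0 1) ∧
  (∃ a ∈ closedBall (0 : ℂ) 1, ∃ b ∈ closedBall (0 : ℂ) 1, ψ a ≠ ψ b) ∧
  ψ '' sphere 0 1 ⊆ S

/-- The polynomial hull of `K ⊆ ℂⁿ`. -/
def polyHull {n : ℕ} (K : Set (EuclideanSpace ℂ (Fin n))) : Set (EuclideanSpace ℂ (Fin n)) :=
  {z | ∀ P : MvPolynomial (Fin n) ℂ,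
    ‖MvPolynomial.eval (fun i => z i) P‖ ≤
      ⨆ w : K, ‖MvPolynomial.eval (fun i => (w : EuclideanSpace ℂ (Fin n)) i) P‖}

/-- The rational hull of `K ⊆ ℂⁿ`. -/
def ratHull {n : ℕ} (K : Set (EuclideanSpace ℂ (Fin n))) : Set (EuclideanSpace ℂ (Fin n)) :=
  {z | ∀ P : MvPolynomial (Fin n) ℂ,
    MvPolynomial.eval (fun i => z i) P ∈
      (fun w : EuclideanSpace ℂ (Fin n) => MvPolynomial.eval (fun i => w i) P) '' K}

/-!
Let `ψ₁`, `ψ₂` be the two support discs, translated to be centred at `0`, and let `f` be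
holomorphic near `H`. Let `χ` be a smooth cutoff equal to `1` on the first side of `H` and to `0`
on the second side, away from `H`, so that `∂̄χ` is supported where `f` is holomorphic. Put
`Tᵢ(z) = ∫ f(z + ψᵢ(ξ)) ∂̄_ξ[χ(z + ψᵢ(ξ))] / ξ` and `F = (T₁ - T₂) / π`. By the Cauchy–Pompeiu
formula, replacing `χ` by another cutoff `χ'` changes both `Tᵢ(z)` by the same multiple of
`f(z) (χ - χ')(z)`, so `F` does not depend on the cutoff. Letting the cutoff be translated along
with `z` then shows that `F` is holomorphic on a ball whose radius depends only on the discs, and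
comparison with the constant cutoffs `1` on the first disc and `0` on the second shows that `F = f`
near `p`. By the identity theorem `F = f` on every connected subset of `H` through `p`.

It remains to see that `H` is locally connected at `p`. By Weierstrass preparation, deduced here
from the inverse function theorem in the Banach space of absolutely summable power series, the
zero set of an analytic function is locally that of a polynomial in one variable. A finite family
of such polynomials, closed under pseudo-division and differentiation, cuts a cylinder over a
connected base with constant vanishing of the leading coefficients into finitely many connected
cells; induction on the dimension follows.
-/

section PseudoRemainder

open Polynomial

variable {R : Type*} [CommRing R]

theorem exists_pseudoRem (p : R[X]) {q : R[X]} (hq : 0 < q.natDegree) :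
    ∃ r : R[X], r.natDegree < q.natDegree ∧ ∃ (s : R[X]) (k : ℕ),
      C (q.leadingCoeff ^ k) * p = q * s + r := by
  induction hn : p.natDegree using Nat.strong_induction_on generalizing p with
  | _ n ih =>
    rcases lt_or_ge p.natDegree q.natDegree with hpq | hqp
    · exact ⟨p, hpq, 0, 0, by simp⟩
    obtain ⟨r, hr, s, k, hs⟩ :=
      ih _ (hn ▸ natDegree_cancelLeads_lt_of_natDegree_le_natDegree hqp (hq.trans_le hqp))
        (q.cancelLeads p) rfl
    refine ⟨r, hr, s + C (q.leadingCoeff ^ k * p.leadingCoeff) * X ^ (p.natDegree - q.natDegree),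
      k + 1, ?_⟩
    simp only [cancelLeads, tsub_eq_zero_of_le hqp, pow_zero, mul_one, map_mul, pow_succ,
      map_pow] at hs ⊢
    linear_combination hs

/-- A pseudo-remainder of `p` on division by `q`: a polynomial of degree less than that of `q`
which agrees modulo `q` with a multiple of `p` by a power of the leading coefficient of `q`. The
value is `0` when `q` is constant. -/
def pseudoRem (p q : R[X]) : R[X] :=
  open Classical in if hq : 0 < q.natDegree then (exists_pseudoRem p hq).choose else 0

theorem natDegree_pseudoRem_lt (p : R[X]) {q : R[X]} (hq : 0 < q.natDegree) :
    (pseudoRem p q).natDegree < q.natDegree := by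
  rw [pseudoRem, dif_pos hq]
  exact (exists_pseudoRem p hq).choose_spec.1

theorem exists_C_leadingCoeff_pow_mul_eq_mul_add_pseudoRem (p : R[X]) {q : R[X]}
    (hq : 0 < q.natDegree) :
    ∃ (s : R[X]) (k : ℕ), C (q.leadingCoeff ^ k) * p = q * s + pseudoRem p q := by
  rw [pseudoRem, dif_pos hq]
  exact (exists_pseudoRem p hq).choose_spec.2

theorem exists_finset_superset_closed_of_degree_lt {α : Type*} (d : α → ℕ)
    (op : α → α → Finset α)
    (hop : ∀ p q, ∀ r ∈ op p q, 0 < d q → d r < d q) (F : Finset α) :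
    ∃ T : Finset α, F ⊆ T ∧ ∀ p ∈ T, ∀ q ∈ T, 0 < d q → d q ≤ d p → op p q ⊆ T := by
  classical
  suffices descent : ∀ (e : ℕ) (F : Finset α),
      (∀ p ∈ F, ∀ q ∈ F, e < d q → d q ≤ d p → op p q ⊆ F) →
      ∃ T : Finset α, F ⊆ T ∧ ∀ p ∈ T, ∀ q ∈ T, 0 < d q → d q ≤ d p → op p q ⊆ T from
    descent (F.sup d) F fun p _ q hq hlt _ => absurd hlt (Finset.le_sup hq).not_gt
  intro e
  induction e with
  | zero => exact fun F hF => ⟨F, subset_rfl, hF⟩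
  | succ e ih =>
    intro F hF
    let N := ((F ×ˢ F).filter fun pq => d pq.2 = e + 1).biUnion fun pq => op pq.1 pq.2
    have hN : ∀ r ∈ N, d r ≤ e := by
      intro r hr
      obtain ⟨pq, hpq, hr⟩ := Finset.mem_biUnion.1 hr
      have := (Finset.mem_filter.1 hpq).2
      have := hop _ _ r hr (by omega)
      omega
    have mem_of_lt : ∀ r ∈ F ∪ N, e < d r → r ∈ F := fun r hr her =>
      (Finset.mem_union.1 hr).resolve_right fun hrN => (hN r hrN).not_gt her
    obtain ⟨T, hFT, hT⟩ := ih (F ∪ N) fun p hp q hq heq hqp => by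
      have hpF := mem_of_lt p hp (heq.trans_le hqp)
      have hqF := mem_of_lt q hq heq
      rcases Nat.lt_or_ge (e + 1) (d q) with hlt | hle
      · exact (hF p hpF q hqF hlt hqp).trans Finset.subset_union_left
      · have hmem : (p, q) ∈ (F ×ˢ F).filter fun pq => d pq.2 = e + 1 :=
          Finset.mem_filter.2 ⟨Finset.mk_mem_product hpF hqF, by dsimp only; omega⟩
        exact (Finset.subset_biUnion_of_mem (fun pq : α × α => op pq.1 pq.2) hmem).trans
          Finset.subset_union_right
    exact ⟨T, Finset.subset_union_left.trans hFT, hT⟩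

/-- `T` is stable under the operations used to eliminate the last variable: deleting leading
terms, differentiating, and taking pseudo-remainders. -/
structure IsEliminationClosed (T : Finset R[X]) : Prop where
  eraseLead_mem : ∀ p ∈ T, 0 < p.natDegree → p.eraseLead ∈ T
  derivative_mem : ∀ p ∈ T, 0 < p.natDegree → derivative p ∈ T
  pseudoRem_mem : ∀ p ∈ T, ∀ q ∈ T, 0 < q.natDegree → q.natDegree ≤ p.natDegree →
    pseudoRem p q ∈ T

theorem natDegree_eraseLead_lt {p : R[X]} (hp : 0 < p.natDegree) :
    p.eraseLead.natDegree < p.natDegree :=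
  p.eraseLead_natDegree_lt_or_eraseLead_eq_zero.elim id fun h => by rwa [h, natDegree_zero]

theorem exists_isEliminationClosed_superset (F : Finset R[X]) :
    ∃ T : Finset R[X], F ⊆ T ∧ IsEliminationClosed T := by
  classical
  obtain ⟨T, hFT, hT⟩ := exists_finset_superset_closed_of_degree_lt natDegree
    (fun p q : R[X] => {q.eraseLead, derivative q, pseudoRem p q}) (by
      intro p q r hr hq
      simp only [Finset.mem_insert, Finset.mem_singleton] at hr
      rcases hr with rfl | rfl | rfl
      exacts [natDegree_eraseLead_lt hq, natDegree_derivative_lt hq.ne',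
        natDegree_pseudoRem_lt p hq]) F
  exact ⟨T, hFT, fun p hp hd => hT p hp p hp hd le_rfl (by simp),
    fun p hp hd => hT p hp p hp hd le_rfl (by simp),
    fun p hp q hq hd hqp => hT p hp q hq hd hqp (by simp)⟩

end PseudoRemainder

section Delineation

open Set

theorem exists_mem_Ioo_eq_zero_and_forall_lt_iff {h : ℝ → ℝ} {a b : ℝ} (hab : a < b)
    (hc : ContinuousOn h (Icc a b)) (hinj : InjOn h (Icc a b)) (hneg : h a * h b < 0) :
    ∃ c ∈ Ioo a b, h c = 0 ∧
      ∀ t ∈ Icc a b, (c < t ↔ 0 < h t * h b) ∧ (t < c ↔ 0 < h t * h a) := by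
  have ha : a ∈ Icc a b := left_mem_Icc.2 hab.le
  have hb : b ∈ Icc a b := right_mem_Icc.2 hab.le
  rcases hc.strictMonoOn_of_injOn_Icc' hab.le hinj with hmono | hanti
  · have hlt := hmono ha hb hab
    have ha0 : h a < 0 := by nlinarith
    have hb0 : 0 < h b := by nlinarith
    obtain ⟨c, hcI, hc0⟩ := intermediate_value_Ioo hab.le hc ⟨ha0, hb0⟩
    refine ⟨c, hcI, hc0, fun t ht => ⟨?_, ?_⟩⟩
    · rw [mul_pos_iff_of_pos_right hb0, ← hc0, hmono.lt_iff_lt (Ioo_subset_Icc_self hcI) ht]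
    · rw [mul_comm, ← smul_eq_mul, smul_pos_iff_of_neg_left ha0, ← hc0,
        hmono.lt_iff_lt ht (Ioo_subset_Icc_self hcI)]
  · have hlt := hanti ha hb hab
    have ha0 : 0 < h a := by nlinarith
    have hb0 : h b < 0 := by nlinarith
    obtain ⟨c, hcI, hc0⟩ := intermediate_value_Ioo' hab.le hc ⟨hb0, ha0⟩
    refine ⟨c, hcI, hc0, fun t ht => ⟨?_, ?_⟩⟩
    · rw [mul_comm, ← smul_eq_mul, smul_pos_iff_of_neg_left hb0, ← hc0,
        hanti.lt_iff_gt ht (Ioo_subset_Icc_self hcI)]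
    · rw [mul_pos_iff_of_pos_right ha0, ← hc0, hanti.lt_iff_gt (Ioo_subset_Icc_self hcI) ht]

variable {B : Type*}

/-- The section `η` is the immediate successor of the section `ξ` in `Ξ`. -/
structure IsGap (Ξ : Set (B → ℝ)) (ξ η : B → ℝ) : Prop where
  left_mem : ξ ∈ Ξ
  right_mem : η ∈ Ξ
  lt : ∀ x, ξ x < η x
  le_or_le : ∀ ζ ∈ Ξ, (∀ x, ζ x ≤ ξ x) ∨ ∀ x, η x ≤ ζ x

/-- The zero set of `g` in the band `B × [a, b]` is everything, or is a union of graphs of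
members of `Ξ`. -/
def Delineates (a b : ℝ) (Ξ : Set (B → ℝ)) (g : B × ℝ → ℝ) : Prop :=
  (∀ z, g z = 0) ∨
    (∀ x, ∀ t ∈ Icc a b, g (x, t) = 0 → ∃ ξ ∈ Ξ, ξ x = t) ∧
      ∀ ξ ∈ Ξ, (∀ x, g (x, ξ x) = 0) ∨ ∀ x, g (x, ξ x) ≠ 0

variable {a b : ℝ} {Ξ Ξ' : Set (B → ℝ)} {ξ η ξ' η' : B → ℝ} {g : B × ℝ → ℝ}

theorem Delineates.eq_zero_or_ne_zero (hΞ : Delineates a b Ξ g) (hξ : ξ ∈ Ξ) :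
    (∀ x, g (x, ξ x) = 0) ∨ ∀ x, g (x, ξ x) ≠ 0 :=
  hΞ.elim (fun h => .inl fun _ => h _) fun h => h.2 ξ hξ

theorem IsGap.notMem_Ioo (h : IsGap Ξ ξ η) {ζ : B → ℝ} (hζ : ζ ∈ Ξ) (x : B) :
    ζ x ∉ Ioo (ξ x) (η x) := fun hx =>
  (h.le_or_le ζ hζ).elim (fun hle => (hle x).not_gt hx.1) fun hle => (hle x).not_gt hx.2

theorem IsGap.le_left_of_mem_Ioo (h : IsGap Ξ ξ η) (h' : IsGap Ξ ξ' η') {x : B} {t : ℝ}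
    (ht : t ∈ Ioo (ξ x) (η x)) (ht' : t ∈ Ioo (ξ' x) (η' x)) (y : B) : ξ y ≤ ξ' y :=
  ((h'.le_or_le ξ h.left_mem).resolve_right fun hle =>
    (hle x).not_gt (ht.1.trans ht'.2)) y

theorem IsGap.right_le_of_mem_Ioo (h : IsGap Ξ ξ η) (h' : IsGap Ξ ξ' η') {x : B} {t : ℝ}
    (ht : t ∈ Ioo (ξ x) (η x)) (ht' : t ∈ Ioo (ξ' x) (η' x)) (y : B) : η' y ≤ η y :=
  ((h'.le_or_le η h.right_mem).resolve_left fun hle =>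
    (hle x).not_gt (ht'.1.trans ht.2)) y

theorem IsGap.unique (h : IsGap Ξ ξ η) (h' : IsGap Ξ ξ' η') {x : B} {t : ℝ}
    (ht : t ∈ Ioo (ξ x) (η x)) (ht' : t ∈ Ioo (ξ' x) (η' x)) : ξ = ξ' ∧ η = η' :=
  ⟨funext fun y => (h.le_left_of_mem_Ioo h' ht ht' y).antisymm (h'.le_left_of_mem_Ioo h ht' ht y),
    funext fun y =>
      (h'.right_le_of_mem_Ioo h ht' ht y).antisymm (h.right_le_of_mem_Ioo h' ht ht' y)⟩

variable [TopologicalSpace B]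

theorem exists_continuous_root {g : B × ℝ → ℝ} {a b : B → ℝ} (hg : Continuous g)
    (ha : Continuous a) (hb : Continuous b) (hab : ∀ x, a x < b x)
    (hinj : ∀ x, InjOn (fun t => g (x, t)) (Icc (a x) (b x)))
    (hneg : ∀ x, g (x, a x) * g (x, b x) < 0) :
    ∃ ζ : B → ℝ, Continuous ζ ∧ ∀ x, ζ x ∈ Ioo (a x) (b x) ∧ g (x, ζ x) = 0 := by
  choose ζ hζ hζ0 hlt using fun x =>
    exists_mem_Ioo_eq_zero_and_forall_lt_iff (hab x) (by fun_prop) (hinj x) (hneg x)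
  refine ⟨ζ, ?_, fun x => ⟨hζ x, hζ0 x⟩⟩
  have clamp_mem (c : ℝ) (x : B) : max (a x) (min (b x) c) ∈ Icc (a x) (b x) :=
    ⟨le_max_left _ _, max_le (hab x).le (min_le_left _ _)⟩
  have clamp_lt (c : ℝ) (x : B) : max (a x) (min (b x) c) < ζ x ↔ c < ζ x := by
    simp [(hζ x).1, (hζ x).2.not_gt]
  have lt_clamp (c : ℝ) (x : B) : ζ x < max (a x) (min (b x) c) ↔ ζ x < c := by
    simp [(hζ x).2, (hζ x).1.not_gt]
  refine OrderTopology.continuous_iff.2 fun c => ⟨?_, ?_⟩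
  · have : ζ ⁻¹' Ioi c = {x | 0 < g (x, max (a x) (min (b x) c)) * g (x, a x)} := by
      ext x
      rw [mem_ofPred_eq, ← (hlt x _ (clamp_mem c x)).2, clamp_lt, mem_preimage, mem_Ioi]
    exact this ▸ isOpen_lt (by fun_prop) (by fun_prop)
  · have : ζ ⁻¹' Iio c = {x | 0 < g (x, max (a x) (min (b x) c)) * g (x, b x)} := by
      ext x
      rw [mem_ofPred_eq, ← (hlt x _ (clamp_mem c x)).1, lt_clamp, mem_preimage, mem_Iio]
    exact this ▸ isOpen_lt (by fun_prop) (by fun_prop)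

theorem forall_lt_of_exists_lt_of_forall_ne [PreconnectedSpace B] {ξ η : B → ℝ}
    (hξ : Continuous ξ) (hη : Continuous η) (hne : ∀ x, ξ x ≠ η x) {x₀ : B} (h₀ : ξ x₀ < η x₀)
    (x : B) : ξ x < η x := by
  by_contra! hx
  obtain ⟨y, hy⟩ := intermediate_value_univ₂ hξ hη h₀.le hx
  exact hne y hy

/-- A finite family of pairwise disjoint continuous sections of the band `B × [a, b] → B`,
including the two constant ones which bound it. -/
structure IsSectionFamily (a b : ℝ) (Ξ : Set (B → ℝ)) : Prop where
  finite : Ξ.Finite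
  continuous : ∀ ξ ∈ Ξ, Continuous ξ
  mem_Icc : ∀ ξ ∈ Ξ, ∀ x, ξ x ∈ Icc a b
  left_mem : (fun _ => a) ∈ Ξ
  right_mem : (fun _ => b) ∈ Ξ
  ne : ∀ ξ ∈ Ξ, ∀ η ∈ Ξ, ξ ≠ η → ∀ x, ξ x ≠ η x

theorem Delineates.mono (hg : Delineates a b Ξ g) (hΞ' : IsSectionFamily a b Ξ') (h : Ξ ⊆ Ξ') :
    Delineates a b Ξ' g := by
  refine hg.imp_right fun ⟨hroot, hsign⟩ => ⟨fun x t ht h0 => ?_, fun ζ hζ => ?_⟩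
  · obtain ⟨ξ, hξ, rfl⟩ := hroot x t ht h0
    exact ⟨ξ, h hξ, rfl⟩
  · by_cases hζΞ : ζ ∈ Ξ
    · exact hsign ζ hζΞ
    · refine .inr fun x h0 => ?_
      obtain ⟨ξ, hξ, hx⟩ := hroot x (ζ x) (hΞ'.mem_Icc ζ hζ x) h0
      exact hΞ'.ne ξ (h hξ) ζ hζ (fun he => hζΞ (he ▸ hξ)) x hx

theorem isSectionFamily_endpoints (hab : a < b) :
    IsSectionFamily a b ({fun _ => a, fun _ => b} : Set (B → ℝ)) where
  finite := toFinite _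
  continuous := by simp [continuous_const]
  mem_Icc := by simp [hab.le]
  left_mem := by simp
  right_mem := by simp
  ne := by
    rintro _ (rfl | rfl) _ (rfl | rfl) hne x
    exacts [absurd rfl hne, hab.ne, hab.ne', absurd rfl hne]

theorem IsSectionFamily.le_of_le [PreconnectedSpace B] (hΞ : IsSectionFamily a b Ξ)
    (hξ : ξ ∈ Ξ) (hη : η ∈ Ξ) {x₀ : B} (h₀ : ξ x₀ ≤ η x₀) (x : B) : ξ x ≤ η x := by
  rcases eq_or_ne ξ η with rfl | hne
  · exact le_rfl
  · have hne' := hΞ.ne ξ hξ η hη hne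
    exact (forall_lt_of_exists_lt_of_forall_ne (hΞ.continuous ξ hξ) (hΞ.continuous η hη) hne'
      (h₀.lt_of_ne (hne' x₀)) x).le

theorem IsSectionFamily.exists_isGap [PreconnectedSpace B] (hΞ : IsSectionFamily a b Ξ)
    {x₀ : B} {t : ℝ} (ht : t ∈ Icc a b) (hne : ∀ ξ ∈ Ξ, ξ x₀ ≠ t) :
    ∃ ξ η, IsGap Ξ ξ η ∧ t ∈ Ioo (ξ x₀) (η x₀) := by
  obtain ⟨ξ, ⟨hξ, hξt⟩, hmax⟩ := exists_max_image {ξ ∈ Ξ | ξ x₀ < t} (fun ξ => ξ x₀)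
    (hΞ.finite.subset (sep_subset _ _)) ⟨_, hΞ.left_mem, ht.1.lt_of_ne (hne _ hΞ.left_mem)⟩
  obtain ⟨η, ⟨hη, htη⟩, hmin⟩ := exists_min_image {η ∈ Ξ | t < η x₀} (fun η => η x₀)
    (hΞ.finite.subset (sep_subset _ _))
    ⟨_, hΞ.right_mem, ht.2.lt_of_ne (hne _ hΞ.right_mem).symm⟩
  refine ⟨ξ, η, ⟨hξ, hη, fun x => ?_, fun ζ hζ => ?_⟩, hξt, htη⟩
  · refine (hΞ.le_of_le hξ hη (hξt.trans htη).le x).lt_of_ne (hΞ.ne ξ hξ η hη ?_ x)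
    rintro rfl
    exact hξt.not_gt htη
  · exact (hne ζ hζ).lt_or_gt.imp (fun h => hΞ.le_of_le hζ hξ (hmax ζ ⟨hζ, h⟩))
      fun h => hΞ.le_of_le hη hζ (hmin ζ ⟨hζ, h⟩)

theorem IsGap.mem_Icc_of_mem_Ioo (h : IsGap Ξ ξ η) (hΞ : IsSectionFamily a b Ξ) {x : B} {t : ℝ}
    (ht : t ∈ Ioo (ξ x) (η x)) : t ∈ Icc a b :=
  ⟨(hΞ.mem_Icc ξ h.left_mem x).1.trans ht.1.le, ht.2.le.trans (hΞ.mem_Icc η h.right_mem x).2⟩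

/-- The continuous zeros of `g` lying in the gaps of `Ξ`. -/
def gapRoots (Ξ : Set (B → ℝ)) (g : B × ℝ → ℝ) : Set (B → ℝ) :=
  {ζ | Continuous ζ ∧ ∃ ξ η, IsGap Ξ ξ η ∧ ∀ x, ζ x ∈ Ioo (ξ x) (η x) ∧ g (x, ζ x) = 0}

theorem IsGap.injOn (h : IsGap Ξ ξ η) (hΞ : IsSectionFamily a b Ξ) {x : B}
    (hg : Differentiable ℝ fun t => g (x, t))
    (hderiv : ∀ t ∈ Icc a b, deriv (fun t => g (x, t)) t = 0 → ∃ ξ ∈ Ξ, ξ x = t) :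
    InjOn (fun t => g (x, t)) (Icc (ξ x) (η x)) := by
  have aux : ∀ s ∈ Icc (ξ x) (η x), ∀ t ∈ Icc (ξ x) (η x), g (x, s) = g (x, t) → ¬ s < t := by
    intro s hs t ht hst hlt
    obtain ⟨c, hc, hc0⟩ := exists_deriv_eq_zero hlt hg.continuous.continuousOn hst
    have hcI : c ∈ Ioo (ξ x) (η x) := ⟨hs.1.trans_lt hc.1, hc.2.trans_le ht.2⟩
    obtain ⟨ζ, hζ, rfl⟩ := hderiv c (h.mem_Icc_of_mem_Ioo hΞ hcI) hc0
    exact h.notMem_Ioo hζ x hcI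
  exact fun s hs t ht hst =>
    le_antisymm (not_lt.1 (aux t ht s hs hst.symm)) (not_lt.1 (aux s hs t ht hst))

section Refine

variable (hΞ : IsSectionFamily a b Ξ) (hd : ∀ x, Differentiable ℝ fun t => g (x, t))
  (hderiv : ∀ x, ∀ t ∈ Icc a b, deriv (fun t => g (x, t)) t = 0 → ∃ ξ ∈ Ξ, ξ x = t)
include hΞ hd hderiv

theorem eq_of_mem_gapRoots {ζ ζ' : B → ℝ} (hζ : ζ ∈ gapRoots Ξ g) (hζ' : ζ' ∈ gapRoots Ξ g)
    {x : B} (hx : ζ x = ζ' x) : ζ = ζ' := by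
  obtain ⟨-, ξ, η, hgap, hζ⟩ := hζ
  obtain ⟨-, ξ', η', hgap', hζ'⟩ := hζ'
  obtain ⟨rfl, rfl⟩ := hgap.unique hgap' (hζ x).1 (hx ▸ (hζ' x).1)
  exact funext fun y => hgap.injOn hΞ (hd y) (hderiv y) (Ioo_subset_Icc_self (hζ y).1)
    (Ioo_subset_Icc_self (hζ' y).1) ((hζ y).2.trans (hζ' y).2.symm)

theorem finite_gapRoots : (gapRoots Ξ g).Finite := by
  let F (ξη : (B → ℝ) × (B → ℝ)) : Set (B → ℝ) :=
    {ζ | IsGap Ξ ξη.1 ξη.2 ∧ ∀ x, ζ x ∈ Ioo (ξη.1 x) (ξη.2 x) ∧ g (x, ζ x) = 0}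
  have hF : ∀ ξη, (F ξη).Subsingleton := fun ξη ζ hζ ζ' hζ' => funext fun y =>
    hζ.1.injOn hΞ (hd y) (hderiv y) (Ioo_subset_Icc_self (hζ.2 y).1)
      (Ioo_subset_Icc_self (hζ'.2 y).1) ((hζ.2 y).2.trans (hζ'.2 y).2.symm)
  refine ((hΞ.finite.prod hΞ.finite).biUnion fun ξη _ => (hF ξη).finite).subset ?_
  rintro ζ ⟨-, ξ, η, hgap, hζ⟩
  exact mem_biUnion (x := (ξ, η)) ⟨hgap.left_mem, hgap.right_mem⟩ ⟨hgap, hζ⟩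

theorem IsSectionFamily.union_gapRoots : IsSectionFamily a b (Ξ ∪ gapRoots Ξ g) where
  finite := hΞ.finite.union (finite_gapRoots hΞ hd hderiv)
  continuous := by
    rintro ζ (hζ | hζ)
    exacts [hΞ.continuous ζ hζ, hζ.1]
  mem_Icc := by
    rintro ζ (hζ | ⟨-, ξ, η, hgap, hζ⟩) x
    · exact hΞ.mem_Icc ζ hζ x
    · exact hgap.mem_Icc_of_mem_Ioo hΞ (hζ x).1
  left_mem := .inl hΞ.left_mem
  right_mem := .inl hΞ.right_mem
  ne := by
    rintro ζ (hζ | hζ) ζ' (hζ' | hζ') hne x hx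
    · exact hΞ.ne ζ hζ ζ' hζ' hne x hx
    · obtain ⟨-, ξ, η, hgap, hζ'⟩ := hζ'
      exact hgap.notMem_Ioo hζ x (hx ▸ (hζ' x).1)
    · obtain ⟨-, ξ, η, hgap, hζ⟩ := hζ
      exact hgap.notMem_Ioo hζ' x (hx ▸ (hζ x).1)
    · exact hne (eq_of_mem_gapRoots hΞ hd hderiv hζ hζ' hx)

theorem exists_mem_gapRoots [PreconnectedSpace B] (hg : Continuous g)
    (hsign : ∀ ξ ∈ Ξ, (∀ x, g (x, ξ x) = 0) ∨ ∀ x, g (x, ξ x) ≠ 0) (hgap : IsGap Ξ ξ η)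
    {x₀ : B} {t : ℝ} (ht : t ∈ Ioo (ξ x₀) (η x₀)) (h0 : g (x₀, t) = 0) :
    ∃ ζ ∈ gapRoots Ξ g, ζ x₀ = t := by
  have hξ := hΞ.continuous ξ hgap.left_mem
  have hη := hΞ.continuous η hgap.right_mem
  have hinj x := hgap.injOn hΞ (hd x) (hderiv x)
  have hξ₀ : ξ x₀ ∈ Icc (ξ x₀) (η x₀) := left_mem_Icc.2 (hgap.lt x₀).le
  have hη₀ : η x₀ ∈ Icc (ξ x₀) (η x₀) := right_mem_Icc.2 (hgap.lt x₀).le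
  have ht' := Ioo_subset_Icc_self ht
  have hneg₀ : g (x₀, ξ x₀) * g (x₀, η x₀) < 0 := by
    have hcont : ContinuousOn (fun t => g (x₀, t)) (Icc (ξ x₀) (η x₀)) := by fun_prop
    rcases hcont.strictMonoOn_of_injOn_Icc' (hgap.lt x₀).le (hinj x₀) with hmono | hanti
    · exact mul_neg_of_neg_of_pos (h0 ▸ hmono hξ₀ ht' ht.1) (h0 ▸ hmono ht' hη₀ ht.2)
    · exact mul_neg_of_pos_of_neg (h0 ▸ hanti hξ₀ ht' ht.1) (h0 ▸ hanti ht' hη₀ ht.2)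
  have hne : ∀ x, g (x, ξ x) * g (x, η x) ≠ 0 := fun x => mul_ne_zero
    ((hsign ξ hgap.left_mem).resolve_left (fun h => by simp [h] at hneg₀) x)
    ((hsign η hgap.right_mem).resolve_left (fun h => by simp [h] at hneg₀) x)
  have hneg : ∀ x, g (x, ξ x) * g (x, η x) < 0 :=
    forall_lt_of_exists_lt_of_forall_ne (by fun_prop) continuous_const hne hneg₀
  obtain ⟨ζ, hζ, hroot⟩ := exists_continuous_root hg hξ hη hgap.lt hinj hneg
  exact ⟨ζ, ⟨hζ, ξ, η, hgap, hroot⟩, hinj x₀ (Ioo_subset_Icc_self (hroot x₀).1) ht'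
    ((hroot x₀).2.trans h0.symm)⟩

theorem delineates_union_gapRoots [PreconnectedSpace B] (hg : Continuous g)
    (hsign : ∀ ξ ∈ Ξ, (∀ x, g (x, ξ x) = 0) ∨ ∀ x, g (x, ξ x) ≠ 0) :
    Delineates a b (Ξ ∪ gapRoots Ξ g) g := by
  refine .inr ⟨fun x t ht h0 => ?_, ?_⟩
  · by_cases hx : ∃ ξ ∈ Ξ, ξ x = t
    · exact hx.imp fun ξ h => ⟨.inl h.1, h.2⟩
    · push Not at hx
      obtain ⟨ξ, η, hgap, htI⟩ := hΞ.exists_isGap ht hx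
      obtain ⟨ζ, hζ, rfl⟩ := exists_mem_gapRoots hΞ hd hderiv hg hsign hgap htI h0
      exact ⟨ζ, .inr hζ, rfl⟩
  · rintro ζ (hζ | ⟨-, _, _, -, hζ⟩)
    exacts [hsign ζ hζ, .inl fun x => (hζ x).2]

end Refine

end Delineation

section PolynomialDelineation

open Set Polynomial

variable {B : Type*} {R : Type*} [CommRing R] {ev : B → R →+* ℝ} {p q : R[X]}

/-- The section `ξ` consists of roots of a nonconstant member of `T` whose leading coefficient
vanishes nowhere on the base and which has degree one or belongs to `S`. -/
def IsAlgebraicSection (ev : B → R →+* ℝ) (S T : Finset R[X]) (ξ : B → ℝ) : Prop :=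
  ∃ q ∈ T, 0 < q.natDegree ∧ (q.natDegree = 1 ∨ q ∈ S) ∧ (∀ x, ev x q.leadingCoeff ≠ 0) ∧
    ∀ x, (q.map (ev x)).eval (ξ x) = 0

theorem eq_zero_or_ne_zero_of_pseudoRem (hq : 0 < q.natDegree) {ξ : B → ℝ}
    (hlc : ∀ x, ev x q.leadingCoeff ≠ 0) (hξ : ∀ x, (q.map (ev x)).eval (ξ x) = 0)
    (hr : (∀ x, ((pseudoRem p q).map (ev x)).eval (ξ x) = 0) ∨
      ∀ x, ((pseudoRem p q).map (ev x)).eval (ξ x) ≠ 0) :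
    (∀ x, (p.map (ev x)).eval (ξ x) = 0) ∨ ∀ x, (p.map (ev x)).eval (ξ x) ≠ 0 := by
  obtain ⟨s, k, hs⟩ := exists_C_leadingCoeff_pow_mul_eq_mul_add_pseudoRem p hq
  have key x : ev x q.leadingCoeff ^ k * (p.map (ev x)).eval (ξ x) =
      ((pseudoRem p q).map (ev x)).eval (ξ x) := by
    simpa [hξ x] using congr((Polynomial.map (ev x) $hs).eval (ξ x))
  simpa only [← key, mul_eq_zero, pow_eq_zero_iff', ne_eq, hlc, false_and, false_or] using hr

theorem delineates_of_natDegree_eq_zero {a b : ℝ} {Ξ : Set (B → ℝ)} (hp : p.natDegree = 0)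
    (hlc : (∀ x, ev x p.leadingCoeff = 0) ∨ ∀ x, ev x p.leadingCoeff ≠ 0) :
    Delineates a b Ξ fun z => (p.map (ev z.1)).eval z.2 := by
  have hval x t : (p.map (ev x)).eval t = ev x p.leadingCoeff := by
    rw [leadingCoeff, hp, eq_C_of_natDegree_eq_zero hp, map_C, eval_C, coeff_C_zero]
  refine hlc.imp (fun h z => (hval _ _).trans (h _)) fun h => ⟨fun x t _ h0 => ?_, fun ξ _ => ?_⟩
  · exact absurd ((hval x t).symm.trans h0) (h x)
  · exact .inr fun x h0 => h x ((hval _ _).symm.trans h0)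

theorem map_eraseLead_eq {x : B} (h : ev x p.leadingCoeff = 0) :
    p.eraseLead.map (ev x) = p.map (ev x) := by
  rw [← self_sub_monomial_natDegree_leadingCoeff, Polynomial.map_sub, map_monomial, h,
    monomial_zero_right, sub_zero]

theorem exists_eval_map_derivative_ne_zero (hp : 0 < p.natDegree) {x : B}
    (hlc : ev x p.leadingCoeff ≠ 0) : ∃ t, ((derivative p).map (ev x)).eval t ≠ 0 := by
  by_contra! h
  have hzero : derivative (p.map (ev x)) = 0 := funext fun t => by
    simpa only [derivative_map, eval_zero] using h t
  have := derivative_eq_zero.1 hzero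
  rw [natDegree_map_of_leadingCoeff_ne_zero _ hlc] at this
  exact hp.ne' this

variable [TopologicalSpace B]

theorem continuous_eval_map (hp : ∀ i, Continuous fun x => ev x (p.coeff i)) :
    Continuous fun z : B × ℝ => (p.map (ev z.1)).eval z.2 := by
  simp only [eval_map, eval₂_eq_sum_range]
  exact continuous_finsetSum _ fun i _ =>
    ((hp i).comp continuous_fst).mul (continuous_snd.pow i)

theorem exists_isSectionFamily_delineates_insert [PreconnectedSpace B] [DecidableEq R[X]]
    {a b : ℝ} {S T : Finset R[X]} (hT : IsEliminationClosed T) {Ξ : Set (B → ℝ)}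
    (hΞ : IsSectionFamily a b Ξ)
    (hdel : ∀ q ∈ S, Delineates a b Ξ fun z => (q.map (ev z.1)).eval z.2)
    (halg : ∀ ξ ∈ Ξ, IsAlgebraicSection ev S T ξ) (hpT : p ∈ T)
    (hlow : ∀ q ∈ T, q.natDegree < p.natDegree → q ∈ S)
    (hmax : ∀ q ∈ S, q.natDegree ≤ p.natDegree)
    (hcont : ∀ i, Continuous fun x => ev x (p.coeff i))
    (hlc : (∀ x, ev x p.leadingCoeff = 0) ∨ ∀ x, ev x p.leadingCoeff ≠ 0) :
    ∃ Ξ' : Set (B → ℝ), IsSectionFamily a b Ξ' ∧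
      (∀ q ∈ insert p S, Delineates a b Ξ' fun z => (q.map (ev z.1)).eval z.2) ∧
      ∀ ξ ∈ Ξ', IsAlgebraicSection ev (insert p S) T ξ := by
  have halg' : ∀ ξ ∈ Ξ, IsAlgebraicSection ev (insert p S) T ξ := fun ξ hξ =>
    (halg ξ hξ).imp fun q hq => hq.imp_right <| .imp_right <| .imp_left <| .imp_right
      Finset.mem_insert_of_mem
  rcases p.natDegree.eq_zero_or_pos with hp0 | hp0
  · exact ⟨Ξ, hΞ, Finset.forall_mem_insert .. |>.2
      ⟨delineates_of_natDegree_eq_zero hp0 hlc, hdel⟩, halg'⟩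
  rcases hlc with hlc | hlc
  · refine ⟨Ξ, hΞ, Finset.forall_mem_insert .. |>.2 ⟨?_, hdel⟩, halg'⟩
    simpa only [map_eraseLead_eq (hlc _)] using
      hdel _ (hlow _ (hT.eraseLead_mem p hpT hp0) (natDegree_eraseLead_lt hp0))
  have hsign : ∀ ξ ∈ Ξ, (∀ x, (p.map (ev x)).eval (ξ x) = 0) ∨
      ∀ x, (p.map (ev x)).eval (ξ x) ≠ 0 := by
    intro ξ hξ
    obtain ⟨q, hqT, hq0, hq, hqlc, hqξ⟩ := halg ξ hξ
    have hqp : q.natDegree ≤ p.natDegree := hq.elim (fun h => h ▸ hp0) (hmax q)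
    have hrS := hlow _ (hT.pseudoRem_mem p hpT q hqT hq0 hqp)
      ((natDegree_pseudoRem_lt p hq0).trans_le hqp)
    exact eq_zero_or_ne_zero_of_pseudoRem hq0 hqlc hqξ ((hdel _ hrS).eq_zero_or_ne_zero hξ)
  have hderiv : ∀ x, ∀ t ∈ Icc a b, deriv (fun t => (p.map (ev x)).eval t) t = 0 →
      ∃ ξ ∈ Ξ, ξ x = t := by
    intro x t ht h0
    have hdS := hlow _ (hT.derivative_mem p hpT hp0) (natDegree_derivative_lt hp0.ne')
    rcases hdel _ hdS with hzero | hroot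
    · obtain ⟨s, hs⟩ := exists_eval_map_derivative_ne_zero hp0 (hlc x)
      exact absurd (hzero (x, s)) hs
    · exact hroot.1 x t ht (by rwa [Polynomial.deriv, derivative_map] at h0)
  have hd x : Differentiable ℝ fun t => (p.map (ev x)).eval t := Polynomial.differentiable _
  have hΞ' := hΞ.union_gapRoots (g := fun z => (p.map (ev z.1)).eval z.2) hd hderiv
  refine ⟨_, hΞ', Finset.forall_mem_insert .. |>.2
    ⟨delineates_union_gapRoots hΞ hd hderiv (continuous_eval_map hcont) hsign,
      fun q hq => (hdel q hq).mono hΞ' Set.subset_union_left⟩, ?_⟩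
  rintro ζ (hζ | ⟨-, _, _, -, hζ⟩)
  exacts [halg' ζ hζ, ⟨p, hpT, hp0, .inr (Finset.mem_insert_self ..), hlc, fun x => (hζ x).2⟩]

theorem exists_isSectionFamily_delineates [PreconnectedSpace B] {a b : ℝ} (hab : a < b)
    {T : Finset R[X]} (hT : IsEliminationClosed T)
    (hcont : ∀ p ∈ T, ∀ i, Continuous fun x => ev x (p.coeff i))
    (hlc : ∀ p ∈ T, (∀ x, ev x p.leadingCoeff = 0) ∨ ∀ x, ev x p.leadingCoeff ≠ 0)
    (ha : IsAlgebraicSection ev ∅ T fun _ => a) (hb : IsAlgebraicSection ev ∅ T fun _ => b) :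
    ∃ Ξ : Set (B → ℝ), IsSectionFamily a b Ξ ∧
      ∀ p ∈ T, Delineates a b Ξ fun z => (p.map (ev z.1)).eval z.2 := by
  classical
  suffices h : ∀ S ⊆ T, (∀ p ∈ S, ∀ q ∈ T, q.natDegree < p.natDegree → q ∈ S) →
      ∃ Ξ : Set (B → ℝ), IsSectionFamily a b Ξ ∧
        (∀ p ∈ S, Delineates a b Ξ fun z => (p.map (ev z.1)).eval z.2) ∧
        ∀ ξ ∈ Ξ, IsAlgebraicSection ev S T ξ from
    (h T subset_rfl fun _ _ _ hq _ => hq).imp fun _ hΞ => ⟨hΞ.1, hΞ.2.1⟩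
  refine fun S => Finset.induction_on_max_value natDegree S (fun _ _ => ?_)
    fun p S _ hmax ih hST hlow => ?_
  · refine ⟨_, isSectionFamily_endpoints hab, by simp, ?_⟩
    rintro ξ (rfl | rfl)
    exacts [ha, hb]
  · rw [Finset.insert_subset_iff] at hST
    have mem_of_lt : ∀ q ∈ T, q.natDegree < p.natDegree → q ∈ S := fun q hq hlt =>
      Finset.mem_of_mem_insert_of_ne (hlow p (Finset.mem_insert_self p S) q hq hlt)
        (ne_of_apply_ne natDegree hlt.ne)
    obtain ⟨Ξ, hΞ, hdel, halg⟩ :=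
      ih hST.2 fun r hr q hq hlt => mem_of_lt q hq (hlt.trans_le (hmax r hr))
    exact exists_isSectionFamily_delineates_insert hT hΞ hdel halg hST.1 mem_of_lt hmax
      (hcont p hST.1) (hlc p hST.1)

end PolynomialDelineation

section CellDecomposition

open Set

variable {X Y : Type*}

/-- Every function in `𝓕` vanishes identically or nowhere on `C`. -/
def ZeroInvariant (𝓕 : Set (X → ℝ)) (C : Set X) : Prop :=
  ∀ f ∈ 𝓕, (∀ x ∈ C, f x = 0) ∨ ∀ x ∈ C, f x ≠ 0

variable [TopologicalSpace X] [TopologicalSpace Y]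

/-- `N` is a finite union of connected sets ("cells", not required to be disjoint), on each of
which every function in `𝓕` vanishes identically or nowhere. -/
def HasCellDecomposition (𝓕 : Set (X → ℝ)) (N : Set X) : Prop :=
  ∃ 𝒞 : Set (Set X), 𝒞.Finite ∧ (∀ C ∈ 𝒞, IsPreconnected C ∧ ZeroInvariant 𝓕 C) ∧ ⋃₀ 𝒞 = N

variable {𝓕 𝓖 : Set (X → ℝ)} {N : Set X}

theorem HasCellDecomposition.of_forall_exists_iff (h : HasCellDecomposition 𝓖 N)
    (hfg : ∀ f ∈ 𝓕, ∃ g ∈ 𝓖, ∀ x ∈ N, f x = 0 ↔ g x = 0) : HasCellDecomposition 𝓕 N := by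
  obtain ⟨𝒞, hfin, hcell, rfl⟩ := h
  refine ⟨𝒞, hfin, fun C hC => ⟨(hcell C hC).1, fun f hf => ?_⟩, rfl⟩
  obtain ⟨g, hg, hiff⟩ := hfg f hf
  have hiff' : ∀ x ∈ C, f x = 0 ↔ g x = 0 := fun x hx => hiff x (mem_sUnion_of_mem hx hC)
  exact ((hcell C hC).2 g hg).imp (fun h x hx => (hiff' x hx).2 (h x hx))
    fun h x hx hfx => h x hx ((hiff' x hx).1 hfx)

theorem HasCellDecomposition.image {π : X → Y} (hπ : Continuous π) {𝓕 : Set (Y → ℝ)}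
    (h : HasCellDecomposition ((· ∘ π) '' 𝓕) N) : HasCellDecomposition 𝓕 (π '' N) := by
  obtain ⟨𝒞, hfin, hcell, rfl⟩ := h
  refine ⟨(π '' ·) '' 𝒞, hfin.image _, ?_, image_sUnion.symm⟩
  rintro _ ⟨C, hC, rfl⟩
  refine ⟨(hcell C hC).1.image π hπ.continuousOn, fun f hf => ?_⟩
  rw [forall_mem_image, forall_mem_image]
  exact (hcell C hC).2 (f ∘ π) (mem_image_of_mem _ hf)

theorem HasCellDecomposition.biUnion {ι : Type*} {I : Set ι} (hI : I.Finite) {G : ι → Set X}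
    (h : ∀ i ∈ I, HasCellDecomposition 𝓕 (G i)) : HasCellDecomposition 𝓕 (⋃ i ∈ I, G i) := by
  choose! 𝒞 hfin hcell hG using h
  refine ⟨⋃ i ∈ I, 𝒞 i, hI.biUnion hfin, fun C hC => ?_, ?_⟩
  · obtain ⟨i, hi, hCi⟩ := mem_iUnion₂.1 hC
    exact hcell i hi C hCi
  · simp only [sUnion_iUnion]
    exact iUnion₂_congr hG

theorem isPreconnected_setOf_mem_Ioo [PreconnectedSpace X] {ξ η : X → ℝ} (hξ : Continuous ξ)
    (hη : Continuous η) (hlt : ∀ x, ξ x < η x) :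
    IsPreconnected {z : X × ℝ | z.2 ∈ Ioo (ξ z.1) (η z.1)} := by
  have himage : {z : X × ℝ | z.2 ∈ Ioo (ξ z.1) (η z.1)} =
      (fun z : X × ℝ => (z.1, AffineMap.lineMap (ξ z.1) (η z.1) z.2)) '' univ ×ˢ Ioo 0 1 := by
    ext ⟨x, t⟩
    have : t ∈ Ioo (ξ x) (η x) ↔ t ∈ AffineMap.lineMap (ξ x) (η x) '' Ioo (0 : ℝ) 1 := by
      rw [← openSegment_eq_image_lineMap, openSegment_eq_Ioo (hlt x)]
    simpa [and_comm, and_assoc] using this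
  rw [himage]
  refine (isPreconnected_univ.prod isPreconnected_Ioo).image _ (Continuous.continuousOn ?_)
  simp only [AffineMap.lineMap_apply_module]
  fun_prop

theorem hasCellDecomposition_of_delineates [PreconnectedSpace X] {a b : ℝ} {Ξ : Set (X → ℝ)}
    (hΞ : IsSectionFamily a b Ξ) {𝓖 : Set (X × ℝ → ℝ)}
    (hdel : ∀ g ∈ 𝓖, Delineates a b Ξ g) : HasCellDecomposition 𝓖 (univ ×ˢ Icc a b) := by
  let graph (ξ : X → ℝ) : Set (X × ℝ) := range fun x => (x, ξ x)
  let between (ξη : (X → ℝ) × (X → ℝ)) : Set (X × ℝ) := {z | z.2 ∈ Ioo (ξη.1 z.1) (ξη.2 z.1)}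
  refine ⟨graph '' Ξ ∪ between '' {ξη | IsGap Ξ ξη.1 ξη.2}, ?_, ?_, ?_⟩
  · refine (hΞ.finite.image _).union (((hΞ.finite.prod hΞ.finite).subset ?_).image _)
    exact fun ξη h => ⟨h.left_mem, h.right_mem⟩
  · rintro _ (⟨ξ, hξ, rfl⟩ | ⟨⟨ξ, η⟩, hgap, rfl⟩)
    · have := hΞ.continuous ξ hξ
      refine ⟨isPreconnected_range (by fun_prop), fun g hg => ?_⟩
      simpa only [graph, forall_mem_range] using (hdel g hg).eq_zero_or_ne_zero hξ
    · refine ⟨isPreconnected_setOf_mem_Ioo (hΞ.continuous ξ hgap.left_mem)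
        (hΞ.continuous η hgap.right_mem) hgap.lt, fun g hg => ?_⟩
      refine (hdel g hg).imp (fun h z _ => h z) fun h z hz h0 => ?_
      obtain ⟨ζ, hζ, hζz⟩ := h.1 z.1 z.2 (hgap.mem_Icc_of_mem_Ioo hΞ hz) h0
      exact hgap.notMem_Ioo hζ z.1 (hζz ▸ hz)
  · refine Subset.antisymm (sUnion_subset ?_) fun z hz => ?_
    · rintro _ (⟨ξ, hξ, rfl⟩ | ⟨⟨ξ, η⟩, hgap, rfl⟩)
      · rintro _ ⟨x, rfl⟩
        exact ⟨mem_univ _, hΞ.mem_Icc ξ hξ x⟩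
      · exact fun z hz => ⟨mem_univ _, hgap.mem_Icc_of_mem_Ioo hΞ hz⟩
    · by_cases hex : ∃ ξ ∈ Ξ, ξ z.1 = z.2
      · obtain ⟨ξ, hξ, hz⟩ := hex
        exact ⟨_, .inl ⟨ξ, hξ, rfl⟩, z.1, Prod.ext rfl hz⟩
      · push Not at hex
        obtain ⟨ξ, η, hgap, hzI⟩ := hΞ.exists_isGap hz.2 hex
        exact ⟨_, .inr ⟨(ξ, η), hgap, rfl⟩, hzI⟩

end CellDecomposition

section PowerSeries

open Filter Topology

/-- The Banach space of absolutely summable real sequences, thought of as the power series that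
converge absolutely on `[-1, 1]`. -/
abbrev SummableSeries : Type := lp (fun _ : ℕ => ℝ) 1

namespace SummableSeries

theorem summable_abs (v : SummableSeries) : Summable fun k => |v k| := by
  simpa using (lp.hasSum_norm (p := 1) (by simp) v).summable

theorem norm_eq_tsum_abs (v : SummableSeries) : ‖v‖ = ∑' k, |v k| := by
  simpa using lp.norm_eq_tsum_rpow (p := 1) (by simp) v

/-- The sum of a power series at a point of `[-1, 1]`. -/
def evalAt (s : Set.Icc (-1 : ℝ) 1) : SummableSeries →L[ℝ] ℝ :=
  (lp.tsumCLM ℝ ℕ ℝ).comp <|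
    lp.mapCLM 1 (fun k => (s : ℝ) ^ k • ContinuousLinearMap.id ℝ ℝ) zero_le_one fun k => by
      simpa [norm_smul] using pow_le_one₀ (abs_nonneg _) (abs_le.2 s.2)

theorem evalAt_apply (s : Set.Icc (-1 : ℝ) 1) (v : SummableSeries) :
    evalAt s v = ∑' k, (s : ℝ) ^ k * v k :=
  rfl

theorem abs_evalAt_le (s : Set.Icc (-1 : ℝ) 1) (v : SummableSeries) : |evalAt s v| ≤ ‖v‖ := by
  have h : ‖evalAt s‖ ≤ 1 * 1 :=
    (ContinuousLinearMap.opNorm_comp_le _ _).trans <|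
      mul_le_mul lp.norm_tsumCLM_le (lp.norm_mapCLM_le ..) (norm_nonneg _) zero_le_one
  simpa using (evalAt s).le_of_opNorm_le h v

theorem summable_pow_mul (s : Set.Icc (-1 : ℝ) 1) (v : SummableSeries) :
    Summable fun k => (s : ℝ) ^ k * v k := by
  refine .of_norm_bounded v.summable_abs fun k => ?_
  rw [norm_mul, norm_pow]
  exact mul_le_of_le_one_left (abs_nonneg _) (pow_le_one₀ (norm_nonneg _) (abs_le.2 s.2))

/-- The monomial `a X ^ k`. -/
def single (k : ℕ) : ℝ →L[ℝ] SummableSeries :=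
  lp.singleContinuousLinearMap ℝ (fun _ : ℕ => ℝ) 1 k

theorem single_apply (k : ℕ) (a : ℝ) (i : ℕ) : single k a i = if i = k then a else 0 :=
  Pi.single_apply k a i

theorem norm_single_le (k : ℕ) : ‖single k‖ ≤ 1 :=
  ContinuousLinearMap.opNorm_le_bound _ zero_le_one fun a =>
    (lp.norm_single (E := fun _ : ℕ => ℝ) (p := 1) one_pos k a).le.trans (one_mul _).ge

theorem evalAt_single (s : Set.Icc (-1 : ℝ) 1) (k : ℕ) (a : ℝ) :
    evalAt s (single k a) = a * (s : ℝ) ^ k := by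
  rw [evalAt_apply, tsum_eq_single k fun i hi => by simp [single_apply, hi]]
  simp [single_apply, mul_comm]

/-- Multiplication by `X ^ j`. -/
def shift (j : ℕ) : SummableSeries →L[ℝ] SummableSeries :=
  have hasSum_abs (v : SummableSeries) :
      HasSum (fun k => |Function.extend (· + j) v 0 k|) ‖v‖ := by
    rw [norm_eq_tsum_abs]
    convert (hasSum_extend_zero (add_left_injective j)).2 v.summable_abs.hasSum using 2 with k
    rw [Function.apply_extend abs]
    congr 1
    exact funext fun _ => abs_zero
  LinearMap.mkContinuous
    { toFun := fun v => ⟨Function.extend (· + j) v 0, memℓp_gen (by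
        simpa using (hasSum_abs v).summable)⟩
      map_add' := fun v w =>
        lp.ext (map_add (Function.ExtendByZero.linearMap ℝ (· + j)) (v : ℕ → ℝ) w)
      map_smul' := fun c v =>
        lp.ext (map_smul (Function.ExtendByZero.linearMap ℝ (· + j)) c (v : ℕ → ℝ)) } 1
    fun v => by
      rw [one_mul, norm_eq_tsum_abs]
      exact (hasSum_abs v).tsum_eq.le

theorem shift_apply_add (j : ℕ) (v : SummableSeries) (i : ℕ) : shift j v (i + j) = v i :=
  (add_left_injective j).extend_apply (v : ℕ → ℝ) _ i

theorem shift_apply_of_lt {i j : ℕ} (h : i < j) (v : SummableSeries) : shift j v i = 0 :=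
  Function.extend_apply' (v : ℕ → ℝ) _ i fun ⟨_, _⟩ => by omega

theorem evalAt_shift (s : Set.Icc (-1 : ℝ) 1) (j : ℕ) (v : SummableSeries) :
    evalAt s (shift j v) = (s : ℝ) ^ j * evalAt s v := by
  rw [evalAt_apply, evalAt_apply, ← tsum_mul_left,
    ← (summable_pow_mul s (shift j v)).sum_add_tsum_nat_add j,
    Finset.sum_eq_zero fun i hi => by rw [shift_apply_of_lt (Finset.mem_range.1 hi), mul_zero],
    zero_add]
  simp only [shift_apply_add, pow_add]
  exact tsum_congr fun k => by ring

theorem shift_single (j k : ℕ) (a : ℝ) : shift j (single k a) = single (j + k) a := by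
  ext i
  rcases lt_or_ge i j with h | h
  · rw [shift_apply_of_lt h, single_apply, if_neg (by omega)]
  · obtain ⟨i, rfl⟩ := Nat.exists_eq_add_of_le' h
    rw [shift_apply_add, single_apply, single_apply]
    simp only [add_comm i j, add_right_inj]

theorem eq_zero_of_forall_evalAt_eq_zero {v : SummableSeries} (h : ∀ s, evalAt s v = 0) :
    v = 0 := by
  set p := FormalMultilinearSeries.ofScalars ℝ (v : ℕ → ℝ) with hp
  have hr : (1 : NNReal) ≤ p.radius := p.le_radius_of_summable_norm <| by
    simpa [hp, FormalMultilinearSeries.ofScalars_norm] using v.summable_abs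
  have hsum : HasFPowerSeriesAt p.sum p 0 :=
    (p.hasFPowerSeriesOnBall (one_pos.trans_le (by exact_mod_cast hr))).hasFPowerSeriesAt
  have hzero : p.sum =ᶠ[𝓝 0] 0 := by
    filter_upwards [Icc_mem_nhds (by norm_num : (-1 : ℝ) < 0) one_pos] with t ht
    change FormalMultilinearSeries.ofScalarsSum _ t = 0
    rw [FormalMultilinearSeries.ofScalars_sum_eq, ← h ⟨t, ht⟩, evalAt_apply]
    exact tsum_congr fun k => mul_comm ..
  exact lp.ext ((FormalMultilinearSeries.ofScalars_series_eq_zero ℝ).1 (hsum.congr hzero).eq_zero)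

/-- The product of the power series `z.1` and the monic polynomial of degree `d` with lower
coefficients `z.2`. -/
def mulMonic (d : ℕ) (z : SummableSeries × (Fin d → ℝ)) : SummableSeries :=
  shift d z.1 + ∑ j, z.2 j • shift j z.1

theorem evalAt_mulMonic (s : Set.Icc (-1 : ℝ) 1) {d : ℕ} (z : SummableSeries × (Fin d → ℝ)) :
    evalAt s (mulMonic d z) = evalAt s z.1 * ((s : ℝ) ^ d + ∑ j, z.2 j * (s : ℝ) ^ (j : ℕ)) := by
  simp only [mulMonic, map_add, map_sum, map_smul, evalAt_shift, smul_eq_mul, mul_add,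
    Finset.mul_sum]
  rw [mul_comm]
  congr 1
  exact Finset.sum_congr rfl fun j _ => by ring

theorem analyticAt_mulMonic {d : ℕ} (z : SummableSeries × (Fin d → ℝ)) :
    AnalyticAt ℝ (mulMonic d) z := by
  have h (j : ℕ) : AnalyticAt ℝ (fun z : SummableSeries × (Fin d → ℝ) => shift j z.1) z :=
    (shift j).analyticAt _ |>.comp analyticAt_fst
  refine (h d).add (Finset.analyticAt_fun_sum _ fun j _ => AnalyticAt.fun_smul ?_ (h j))
  exact ((ContinuousLinearMap.proj (R := ℝ) (φ := fun _ : Fin d => ℝ) j).analyticAt _).comp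
    analyticAt_snd

/-- The derivative of `mulMonic d` at `(c, 0)`: it places a power series and a polynomial of degree
less than `d`, scaled by `c`, side by side. -/
def mulMonicDeriv (d : ℕ) (c : ℝ) : (SummableSeries × (Fin d → ℝ)) →L[ℝ] SummableSeries :=
  (shift d).comp (.fst ..) + ∑ j : Fin d, ((single j).comp (.proj j)).comp (c • .snd ..)

theorem hasFDerivAt_mulMonic (d : ℕ) (c : ℝ) :
    HasFDerivAt (mulMonic d) (mulMonicDeriv d c) (single 0 c, 0) := by
  have hshift (j : ℕ) : HasFDerivAt (fun z : SummableSeries × (Fin d → ℝ) => shift j z.1)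
      ((shift j).comp (.fst ..)) (single 0 c, 0) :=
    ((shift j).comp (.fst ℝ SummableSeries (Fin d → ℝ))).hasFDerivAt
  refine (hshift d).add (HasFDerivAt.fun_sum fun j _ => ?_)
  have hcoeff : HasFDerivAt (fun z : SummableSeries × (Fin d → ℝ) => z.2 j)
      ((ContinuousLinearMap.proj j).comp (.snd ..)) (single 0 c, 0) :=
    ((ContinuousLinearMap.proj (R := ℝ) (φ := fun _ : Fin d => ℝ) j).comp
      (.snd ℝ SummableSeries _)).hasFDerivAt
  convert! hcoeff.smul (hshift j) using 1
  ext z i <;> simp [shift_single, single_apply, mul_comm]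

theorem mulMonicDeriv_apply_add {d : ℕ} (c : ℝ) (z : SummableSeries × (Fin d → ℝ)) (i : ℕ) :
    mulMonicDeriv d c z (i + d) = z.1 i := by
  simp only [mulMonicDeriv, _root_.add_apply, ContinuousLinearMap.comp_apply, _root_.sum_apply,
    lp.coeFn_add, Pi.add_apply, lp.coeFn_sum, Finset.sum_apply, single_apply]
  rw [Finset.sum_eq_zero fun j _ => if_neg (by omega)]
  simp [shift_apply_add]

theorem mulMonicDeriv_apply_fin {d : ℕ} (c : ℝ) (z : SummableSeries × (Fin d → ℝ)) (j : Fin d) :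
    mulMonicDeriv d c z j = c * z.2 j := by
  simp only [mulMonicDeriv, _root_.add_apply, ContinuousLinearMap.comp_apply, _root_.sum_apply,
    lp.coeFn_add, Pi.add_apply, lp.coeFn_sum, Finset.sum_apply, single_apply, Fin.val_inj]
  simp [shift_apply_of_lt j.is_lt]

theorem bijective_mulMonicDeriv (d : ℕ) {c : ℝ} (hc : c ≠ 0) :
    Function.Bijective (mulMonicDeriv d c) := by
  have hext {w z : SummableSeries} (h₁ : ∀ i, w (i + d) = z (i + d))
      (h₂ : ∀ j : Fin d, w j = z j) : w = z := by
    ext i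
    rcases lt_or_ge i d with h | h
    · exact h₂ ⟨i, h⟩
    · obtain ⟨i, rfl⟩ := Nat.exists_eq_add_of_le' h
      exact h₁ i
  refine ⟨(injective_iff_map_eq_zero _).2 fun z hz => Prod.ext (lp.ext (funext fun i => ?_))
    (funext fun j => ?_), fun w => ?_⟩
  · rw [← mulMonicDeriv_apply_add c, hz]
    rfl
  · refine (mul_eq_zero.1 ?_).resolve_left hc
    rw [← mulMonicDeriv_apply_fin, hz]
    rfl
  · let tail : SummableSeries := ⟨fun i => w (i + d), memℓp_gen (by
      simpa using (summable_nat_add_iff d).2 w.summable_abs)⟩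
    refine ⟨(tail, fun j => w j / c), hext (fun i => ?_) fun j => ?_⟩
    · rw [mulMonicDeriv_apply_add]
    · rw [mulMonicDeriv_apply_fin, mul_div_cancel₀ _ hc]

end SummableSeries

end PowerSeries

section Lift

open Filter Topology SummableSeries
open scoped NNReal ENNReal

theorem nnnorm_prodMk_mul_le {E : Type*} [SeminormedAddCommGroup E] {δ : ℝ≥0} {x : E}
    (hx : ‖x‖₊ ≤ δ) (s : Set.Icc (-1 : ℝ) 1) : ‖(x, (δ : ℝ) * s)‖₊ ≤ δ := by
  rw [Prod.nnnorm_mk, nnnorm_mul, NNReal.nnnorm_eq]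
  exact max_le hx (mul_le_of_le_one_right' (abs_le.2 s.2))

variable {E : Type*} [NormedAddCommGroup E] [NormedSpace ℝ E]
  (p : FormalMultilinearSeries ℝ (E × ℝ) ℝ)

/-- The coefficient of `s ^ k` in the part of `p (x, δ s)` of degree `n` in `x`, as a multilinear
map in `x`. -/
def bihomogeneousPart (δ : ℝ) (n k : ℕ) : ContinuousMultilinearMap ℝ (fun _ : Fin n => E) ℝ :=
  (p.changeOriginSeries n k fun _ => (0, δ)).compContinuousLinearMap fun _ => .inl ℝ E ℝ

/-- The formal multilinear series in `x` whose value is `p (x, δ s)`, expanded in powers of `s`. -/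
def liftSeries (δ : ℝ) : FormalMultilinearSeries ℝ E SummableSeries := fun n =>
  ∑' k, (single k).compContinuousMultilinearMap (bihomogeneousPart p δ n k)

theorem nnnorm_single_comp_bihomogeneousPart_le (δ : ℝ≥0) (n k : ℕ) :
    ‖(single k).compContinuousMultilinearMap (bihomogeneousPart p δ n k)‖₊ ≤
      ‖p.changeOriginSeries n k‖₊ * δ ^ k := by
  have hinl : ∏ _i : Fin n, ‖ContinuousLinearMap.inl ℝ E ℝ‖ ≤ 1 :=
    Finset.prod_le_one (fun _ _ => norm_nonneg _) fun _ _ =>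
      ContinuousLinearMap.norm_inl_le_one ℝ E ℝ
  have : ‖(single k).compContinuousMultilinearMap (bihomogeneousPart p δ n k)‖ ≤
      ‖p.changeOriginSeries n k‖ * (δ : ℝ) ^ k := calc
    _ ≤ ‖single k‖ * ‖bihomogeneousPart p δ n k‖ :=
      ContinuousLinearMap.norm_compContinuousMultilinearMap_le _ _
    _ ≤ ‖bihomogeneousPart p δ n k‖ :=
      mul_le_of_le_one_left (norm_nonneg _) (norm_single_le k)
    _ ≤ ‖p.changeOriginSeries n k fun _ => ((0 : E), (δ : ℝ))‖ *
        ∏ _i : Fin n, ‖ContinuousLinearMap.inl ℝ E ℝ‖ :=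
      ContinuousMultilinearMap.norm_compContinuousLinearMap_le _ _
    _ ≤ ‖p.changeOriginSeries n k fun _ => ((0 : E), (δ : ℝ))‖ :=
      mul_le_of_le_one_right (norm_nonneg _) hinl
    _ ≤ ‖p.changeOriginSeries n k‖ * (δ : ℝ) ^ k := by
      simpa [Prod.norm_def] using
        (p.changeOriginSeries n k).le_opNorm fun _ => ((0 : E), (δ : ℝ))
  exact_mod_cast this

variable {δ r : ℝ≥0}

theorem le_radius_liftSeries (h : (δ : ℝ≥0∞) + r < p.radius) :
    (r : ℝ≥0∞) ≤ (liftSeries p δ).radius := by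
  have hδ : (δ : ℝ≥0∞) < p.radius := le_self_add.trans_lt h
  refine FormalMultilinearSeries.le_radius_of_summable_nnnorm _ <|
    NNReal.summable_of_le (fun n => ?_)
      (NNReal.summable_sigma.1 (p.changeOriginSeries_summable_aux₁ h)).2
  have hs := p.changeOriginSeries_summable_aux₂ hδ n
  simp only [NNReal.tsum_mul_right]
  gcongr
  refine tsum_of_nnnorm_bounded (hs.hasSum.sigma fun l =>
    ((NNReal.summable_sigma.1 hs).1 l).hasSum) fun l => ?_
  refine (nnnorm_single_comp_bihomogeneousPart_le p δ n l).trans ?_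
  dsimp only
  rw [NNReal.tsum_mul_right]
  gcongr
  exact p.nnnorm_changeOriginSeries_le_tsum n l

theorem evalAt_liftSeries_apply (hδ : (δ : ℝ≥0∞) < p.radius) (s : Set.Icc (-1 : ℝ) 1)
    (hs : ((0 : E), (δ : ℝ) * s) ∈ eball 0 p.radius) (n : ℕ) (x : E) :
    evalAt s (liftSeries p δ n fun _ => x) =
      p.changeOrigin ((0 : E), (δ : ℝ) * s) n fun _ => (x, 0) := by
  have hlift := (ContinuousMultilinearMap.hasSum_eval
    (Summable.of_nnnorm_bounded (p.changeOriginSeries_summable_aux₃ hδ n)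
      (nnnorm_single_comp_bihomogeneousPart_le p δ n)).hasSum fun _ => x).mapL (evalAt s)
  have horigin := ContinuousMultilinearMap.hasSum_eval
    ((p.hasFPowerSeriesOnBall_changeOrigin n (pos_of_gt hδ)).hasSum hs) fun _ => (x, (0 : ℝ))
  rw [zero_add] at horigin
  refine hlift.unique (horigin.congr_fun fun k => ?_)
  have hscale : (p.changeOriginSeries n k fun _ => ((0 : E), (δ : ℝ) * s)) =
      (s : ℝ) ^ k • p.changeOriginSeries n k fun _ => ((0 : E), (δ : ℝ)) := by
    simpa [mul_comm] using
      (p.changeOriginSeries n k).map_smul_univ (fun _ => (s : ℝ)) fun _ => ((0 : E), (δ : ℝ))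
  rw [hscale]
  exact (evalAt_single s k _).trans (mul_comm _ _)

theorem evalAt_sum_liftSeries (h : (δ : ℝ≥0∞) + r < p.radius) {x : E} (hx : ‖x‖₊ < r)
    (s : Set.Icc (-1 : ℝ) 1) : evalAt s ((liftSeries p δ).sum x) = p.sum (x, δ * s) := by
  have hδ : (δ : ℝ≥0∞) < p.radius := le_self_add.trans_lt h
  have hnorm : ‖((0 : E), (δ : ℝ) * s)‖₊ ≤ δ := nnnorm_prodMk_mul_le (by simp) s
  have hs : ((0 : E), (δ : ℝ) * s) ∈ eball 0 p.radius := by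
    rw [mem_eball_zero_iff]
    exact (ENNReal.coe_le_coe.2 hnorm).trans_lt hδ
  have hsum := ((liftSeries p δ).hasSum (x := x) <| by
    rw [mem_eball_zero_iff]
    exact (ENNReal.coe_lt_coe.2 hx).trans_le (le_radius_liftSeries p h)).mapL (evalAt s)
  calc evalAt s ((liftSeries p δ).sum x)
    _ = (p.changeOrigin ((0 : E), (δ : ℝ) * s)).sum (x, 0) := by
      rw [← hsum.tsum_eq]
      exact tsum_congr fun n => evalAt_liftSeries_apply p hδ s hs n x
    _ = p.sum (x, δ * s) := by
      rw [p.changeOrigin_eval]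
      · simp
      · refine lt_of_le_of_lt (add_le_add (ENNReal.coe_le_coe.2 hnorm) ?_) h
        simpa [enorm_eq_nnnorm, Prod.nnnorm_mk] using hx.le

theorem exists_analyticAt_evalAt_eq {f : E × ℝ → ℝ} (hf : AnalyticAt ℝ f 0) {δ₀ : ℝ}
    (hδ₀ : 0 < δ₀) :
    ∃ δ > 0, δ < δ₀ ∧ ∃ F : E → SummableSeries, AnalyticAt ℝ F 0 ∧
      ∀ᶠ x in 𝓝 0, ∀ s, evalAt s (F x) = f (x, δ * s) := by
  obtain ⟨p, R, hp⟩ := hf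
  obtain ⟨r, hr, hrR⟩ := ENNReal.lt_iff_exists_nnreal_btwn.1 hp.r_pos
  obtain ⟨δ, hδ, hδlt⟩ := exists_between (lt_min (half_pos (ENNReal.coe_pos.1 hr))
    (Real.toNNReal_pos.2 hδ₀))
  have hδr : δ < r / 2 := hδlt.trans_le (min_le_left _ _)
  have hδR : (δ : ℝ≥0∞) + δ < R := hrR.trans' <| by
    exact_mod_cast (add_lt_add hδr hδr).trans_eq (add_halves r)
  have hδp := hδR.trans_le hp.r_le
  refine ⟨δ, hδ, (Real.lt_toNNReal_iff_coe_lt).1 (hδlt.trans_le (min_le_right _ _)),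
    (liftSeries p δ).sum, ?_, ?_⟩
  · exact ((liftSeries p δ).hasFPowerSeriesOnBall
      ((ENNReal.coe_pos.2 hδ).trans_le (le_radius_liftSeries p hδp))).analyticAt
  · filter_upwards [eball_mem_nhds (0 : E) (ENNReal.coe_pos.2 hδ)] with x hx s
    have hxδ : ‖x‖₊ < δ := by simpa [enorm_eq_nnnorm] using mem_eball_zero_iff.1 hx
    have hmem : (x, (δ : ℝ) * s) ∈ eball 0 R := mem_eball_zero_iff.2 <|
      (ENNReal.coe_le_coe.2 (nnnorm_prodMk_mul_le hxδ.le s)).trans_lt (le_self_add.trans_lt hδR)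
    rw [evalAt_sum_liftSeries p hδp hxδ, ← hp.sum hmem, zero_add]

end Lift

section WeierstrassPreparation

open Filter Topology Polynomial SummableSeries

variable {E : Type*} [NormedAddCommGroup E] [NormedSpace ℝ E]

theorem evalAt_ne_zero_of_norm_sub_single_lt {c : ℝ} {v : SummableSeries}
    (h : ‖v - single 0 c‖ < |c|) (s : Set.Icc (-1 : ℝ) 1) : evalAt s v ≠ 0 := fun h0 =>
  h.not_ge <| by simpa [h0, evalAt_single] using abs_evalAt_le s (v - single 0 c)

theorem exists_analyticAt_mulMonic_eq {F : E → SummableSeries} (hF : AnalyticAt ℝ F 0) {d : ℕ}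
    {c : ℝ} (hc : c ≠ 0) (hF0 : F 0 = single d c) :
    ∃ G : E → SummableSeries × (Fin d → ℝ), AnalyticAt ℝ G 0 ∧ G 0 = (single 0 c, 0) ∧
      ∀ᶠ x in 𝓝 0, mulMonic d (G x) = F x := by
  let D := ContinuousLinearEquiv.ofBijective (mulMonicDeriv d c)
    (LinearMap.ker_eq_bot.2 (bijective_mulMonicDeriv d hc).1)
    (LinearMap.range_eq_top.2 (bijective_mulMonicDeriv d hc).2)
  have hD : fderiv ℝ (mulMonic d) (single 0 c, 0) = D := (hasFDerivAt_mulMonic d c).fderiv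
  have hstrict := hD ▸ (analyticAt_mulMonic (single 0 c, (0 : Fin d → ℝ))).hasStrictFDerivAt
  let Ψ := hstrict.toOpenPartialHomeomorph (mulMonic d)
  have hmem : (single 0 c, 0) ∈ Ψ.source := hstrict.mem_toOpenPartialHomeomorph_source
  have hbase : Ψ (single 0 c, 0) = F 0 := by
    rw [hF0]
    change mulMonic d _ = _
    simp [mulMonic, shift_single]
  have hsymm : AnalyticAt ℝ Ψ.symm (F 0) :=
    hbase ▸ Ψ.analyticAt_symm' hmem (analyticAt_mulMonic _) hD
  refine ⟨fun x => Ψ.symm (F x), hsymm.comp hF, ?_, ?_⟩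
  · exact (congrArg Ψ.symm hbase.symm).trans (Ψ.left_inv hmem)
  · filter_upwards [hF.continuousAt (Ψ.open_target.mem_nhds (hbase ▸ Ψ.map_source hmem))]
      with x hx using Ψ.right_inv hx

theorem exists_analyticAt_evalAt_eq_zero_iff {F : E → SummableSeries} (hF : AnalyticAt ℝ F 0)
    {d : ℕ} {c : ℝ} (hc : c ≠ 0) (hF0 : F 0 = single d c) :
    ∃ a : Fin d → E → ℝ, (∀ j, AnalyticAt ℝ (a j) 0) ∧ ∀ᶠ x in 𝓝 0, ∀ s,
      evalAt s (F x) = 0 ↔ (s : ℝ) ^ d + ∑ j, a j x * (s : ℝ) ^ (j : ℕ) = 0 := by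
  obtain ⟨G, hG, hG0, hGF⟩ := exists_analyticAt_mulMonic_eq hF hc hF0
  refine ⟨fun j x => (G x).2 j, fun j => ?_, ?_⟩
  · exact ((ContinuousLinearMap.proj (R := ℝ) (φ := fun _ : Fin d => ℝ) j).comp
      (.snd ℝ SummableSeries _)).analyticAt _ |>.comp hG
  · have hnear : ∀ᶠ x in 𝓝 0, ‖(G x).1 - single 0 c‖ < |c| := by
      have := hG.continuousAt.fst.eventually (ball_mem_nhds _ (abs_pos.2 hc))
      simpa [hG0, dist_eq_norm] using this
    filter_upwards [hGF, hnear] with x hx hxc s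
    rw [← hx, evalAt_mulMonic, mul_eq_zero,
      or_iff_right (evalAt_ne_zero_of_norm_sub_single_lt hxc s)]

variable (E) in
/-- The algebra of real functions analytic at the origin; it serves as a ring of coefficients. -/
def analyticSubalgebra : Subalgebra ℝ (E → ℝ) where
  carrier := {g | AnalyticAt ℝ g 0}
  mul_mem' := AnalyticAt.mul
  add_mem' := AnalyticAt.add
  algebraMap_mem' _ := analyticAt_const

/-- Evaluation at a point of a function analytic at the origin. -/
def evalAnalytic (x : E) : analyticSubalgebra E →ₐ[ℝ] ℝ :=
  (Pi.evalAlgHom ℝ (fun _ : E => ℝ) x).comp (analyticSubalgebra E).val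

/-- The value at `(x, t)` of a polynomial whose coefficients are functions of `x`. -/
def evalPolynomial (P : (analyticSubalgebra E)[X]) (z : E × ℝ) : ℝ :=
  (P.map (evalAnalytic z.1 : analyticSubalgebra E →+* ℝ)).eval z.2

theorem exists_polynomial_eq_zero_iff {f : E × ℝ → ℝ} (hf : AnalyticAt ℝ f 0)
    (h0 : ¬ ∀ᶠ t in 𝓝 (0 : ℝ), f (0, t) = 0) :
    ∃ P : (analyticSubalgebra E)[X], ∀ᶠ z in 𝓝 0, f z = 0 ↔ evalPolynomial P z = 0 := by
  have hline : AnalyticAt ℝ (fun t : ℝ => f (0, t)) 0 :=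
    AnalyticAt.comp (g := f) (x := 0) hf ((ContinuousLinearMap.inr ℝ E ℝ).analyticAt 0)
  obtain ⟨d, u, hu, hu0, hfu⟩ := hline.exists_eventuallyEq_pow_smul_nonzero_iff.2 h0
  have hune := hu.continuousAt.eventually_ne hu0
  obtain ⟨δ₀, hδ₀, hball⟩ := eventually_nhds_iff_ball.1 (hfu.and hune)
  have hquot : AnalyticAt ℝ (fun z : E × ℝ => f z / u z.2) 0 :=
    hf.div (AnalyticAt.comp (g := u) (x := (0 : E × ℝ)) hu analyticAt_snd) hu0
  obtain ⟨δ, hδ, hδδ₀, F, hF, hFf⟩ := exists_analyticAt_evalAt_eq hquot hδ₀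
  have hF0 : F 0 = single d (δ ^ d) := by
    refine sub_eq_zero.1 (eq_zero_of_forall_evalAt_eq_zero fun s => ?_)
    have hs : δ * s ∈ ball (0 : ℝ) δ₀ := by
      rw [mem_ball_zero_iff, norm_mul, Real.norm_of_nonneg hδ.le]
      exact (mul_le_of_le_one_right hδ.le (abs_le.2 s.2)).trans_lt hδδ₀
    obtain ⟨hpow, hne⟩ := hball _ hs
    rw [map_sub, hFf.self_of_nhds, evalAt_single, hpow, sub_zero, smul_eq_mul,
      mul_div_cancel_right₀ _ hne, mul_pow, sub_self]
  obtain ⟨a, ha, haF⟩ := exists_analyticAt_evalAt_eq_zero_iff hF (pow_ne_zero d hδ.ne') hF0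
  let coeff (j : Fin d) : analyticSubalgebra E := ⟨a j, ha j⟩
  refine ⟨(X ^ d + ∑ j, C (coeff j) * X ^ (j : ℕ)).comp (C (algebraMap ℝ _ δ⁻¹) * X), ?_⟩
  have hfst : Tendsto Prod.fst (𝓝 (0 : E × ℝ)) (𝓝 0) := continuous_fst.tendsto _
  have hsnd : Tendsto Prod.snd (𝓝 (0 : E × ℝ)) (𝓝 0) := continuous_snd.tendsto _
  filter_upwards [hfst.eventually hFf, hfst.eventually haF, hsnd.eventually hune,
    hsnd.eventually (Icc_mem_nhds (neg_lt_zero.2 hδ) hδ)] with z hFz haz huz hz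
  let s : Set.Icc (-1 : ℝ) 1 := ⟨δ⁻¹ * z.2, abs_le.1 <| by
    rw [abs_mul, abs_inv, abs_of_pos hδ]
    exact inv_mul_le_one_of_le₀ (abs_le.2 hz) hδ.le⟩
  have hfz : evalAt s (F z.1) = f z / u z.2 := by
    rw [hFz, mul_inv_cancel_left₀ hδ.ne']
  rw [← or_iff_left (a := f z = 0) huz, ← div_eq_zero_iff, ← hfz, haz]
  simp [evalPolynomial, Polynomial.map_sum, Polynomial.eval_finsetSum, evalAnalytic, coeff, s]

end WeierstrassPreparation

section Stratification

open Set Filter Polynomial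
open scoped Topology

/-- Arbitrarily small neighbourhoods of `p` have a decomposition into finitely many cells that are
compatible with `𝓕`: a weak form of a stratification of the zero sets of `𝓕` near `p`. -/
def HasLocalCellDecomposition {X : Type*} [TopologicalSpace X] (𝓕 : Set (X → ℝ)) (p : X) : Prop :=
  ∀ O ∈ 𝓝 p, ∃ N ∈ 𝓝 p, N ⊆ O ∧ HasCellDecomposition 𝓕 N

theorem HasLocalCellDecomposition.of_homeomorph {X Y : Type*} [TopologicalSpace X]
    [TopologicalSpace Y] (e : X ≃ₜ Y) {𝓕 : Set (Y → ℝ)} {p : X}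
    (h : HasLocalCellDecomposition ((· ∘ e) '' 𝓕) p) : HasLocalCellDecomposition 𝓕 (e p) := by
  intro O hO
  obtain ⟨N, hN, hNO, hcell⟩ := h (e ⁻¹' O) (e.continuous.continuousAt hO)
  exact ⟨e '' N, e.isOpenMap.image_mem_nhds hN, image_subset_iff.2 hNO, hcell.image e.continuous⟩

-- Only the cells whose closure contains `p` meet a small neighbourhood of `p`, and adding `p` to
-- such a cell keeps it connected.
theorem HasLocalCellDecomposition.exists_isPreconnected_of_eq_zero {X : Type*} [TopologicalSpace X]
    {ρ : X → ℝ} {p : X} (h : HasLocalCellDecomposition {ρ} p) (hp : ρ p = 0) {O : Set X}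
    (hO : O ∈ 𝓝 p) :
    ∃ N ∈ 𝓝 p, ∀ z ∈ N, ρ z = 0 →
      ∃ S, IsPreconnected S ∧ p ∈ S ∧ z ∈ S ∧ S ⊆ O ∩ {w | ρ w = 0} := by
  obtain ⟨_, hN, hNO, 𝒞, hfin, hcell, rfl⟩ := h O hO
  have hfar : ∀ᶠ z in 𝓝 p, ∀ C ∈ 𝒞, p ∉ closure C → z ∉ closure C := by
    refine (eventually_all_finite hfin).2 fun C _ => ?_
    by_cases hpC : p ∈ closure C
    · exact .of_forall fun _ h => absurd hpC h
    · exact (isClosed_closure.isOpen_compl.eventually_mem hpC).mono fun _ h _ => h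
  refine ⟨_, inter_mem hN hfar, ?_⟩
  rintro z ⟨⟨C, hC, hzC⟩, hz⟩ hz0
  have hpC : p ∈ closure C := by_contra fun hpC => hz C hC hpC (subset_closure hzC)
  have hC0 : ∀ x ∈ C, ρ x = 0 := ((hcell C hC).2 ρ rfl).resolve_right fun h => h z hzC hz0
  refine ⟨insert p C, (hcell C hC).1.subset_closure (subset_insert _ _)
    (insert_subset hpC subset_closure), mem_insert _ _, mem_insert_of_mem _ hzC, ?_⟩
  exact insert_subset ⟨mem_of_mem_nhds hO, hp⟩ fun x hx =>
    ⟨hNO (mem_sUnion_of_mem hx hC), hC0 x hx⟩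

variable {E : Type*} [NormedAddCommGroup E] [NormedSpace ℝ E]

theorem isAlgebraicSection_const {B : Set E} {T : Finset (analyticSubalgebra E)[X]} {c : ℝ}
    (hc : X - C (algebraMap ℝ _ c) ∈ T) :
    IsAlgebraicSection (fun x : B => (evalAnalytic (x : E) : analyticSubalgebra E →+* ℝ)) ∅ T
      fun _ => c :=
  ⟨_, hc, by simp, .inl (natDegree_X_sub_C _), by simp, by simp⟩

theorem hasCellDecomposition_prod_Icc {B : Set E} (hB : IsPreconnected B)
    {T : Finset (analyticSubalgebra E)[X]} (hT : IsEliminationClosed T)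
    (hcont : ∀ p ∈ T, ∀ i, ContinuousOn (p.coeff i : E → ℝ) B)
    (hlc : ZeroInvariant ((fun p : (analyticSubalgebra E)[X] => (p.leadingCoeff : E → ℝ)) '' T) B)
    {a b : ℝ} (hab : a < b) (ha : X - C (algebraMap ℝ _ a) ∈ T)
    (hb : X - C (algebraMap ℝ _ b) ∈ T) :
    HasCellDecomposition (evalPolynomial '' T) (B ×ˢ Icc a b) := by
  have := isPreconnected_iff_preconnectedSpace.1 hB
  obtain ⟨Ξ, hΞ, hdel⟩ := exists_isSectionFamily_delineates
    (ev := fun x : B => (evalAnalytic (x : E) : analyticSubalgebra E →+* ℝ)) hab hT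
    (fun p hp i => (hcont p hp i).domRestrict)
    (fun p hp => by simpa only [Subtype.forall] using! hlc _ (mem_image_of_mem _ hp))
    (isAlgebraicSection_const ha) (isAlgebraicSection_const hb)
  let incl : B × ℝ → E × ℝ := Prod.map (↑) id
  have himage : B ×ˢ Icc a b = incl '' (univ ×ˢ Icc a b) := by
    simp only [incl, prodMap_image_prod, image_univ, Subtype.range_coe, image_id]
  rw [himage]
  refine .image (by fun_prop) (hasCellDecomposition_of_delineates hΞ ?_)
  rintro _ ⟨_, ⟨p, hp, rfl⟩, rfl⟩
  exact hdel p hp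

theorem hasLocalCellDecomposition_evalPolynomial
    (hE : ∀ 𝓖 : Set (E → ℝ), 𝓖.Finite → (∀ g ∈ 𝓖, AnalyticAt ℝ g 0) →
      HasLocalCellDecomposition 𝓖 0)
    (F : Finset (analyticSubalgebra E)[X]) :
    HasLocalCellDecomposition (evalPolynomial '' (F : Set (analyticSubalgebra E)[X])) 0 := by
  classical
  intro O hO
  obtain ⟨M, hM, D, hD, hMD⟩ := mem_nhds_prod_iff.1 hO
  obtain ⟨δ, hδ, hδD⟩ := nhds_basis_closedBall.mem_iff.1 hD
  rw [Real.closedBall_eq_Icc, zero_sub, zero_add] at hδD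
  let endpoint (c : ℝ) : (analyticSubalgebra E)[X] := X - C (algebraMap ℝ _ c)
  obtain ⟨T, hFT, hT⟩ := exists_isEliminationClosed_superset (F ∪ {endpoint (-δ), endpoint δ})
  obtain ⟨hF, hends⟩ := Finset.union_subset_iff.1 hFT
  have hcont : ∀ᶠ x in 𝓝 (0 : E), ∀ p ∈ T, ∀ i ∈ p.support,
      ContinuousAt (p.coeff i : E → ℝ) x :=
    (eventually_all_finset T).2 fun p _ => (eventually_all_finset p.support).2 fun i _ =>
      (p.coeff i).2.eventually_analyticAt.mono fun _ h => h.continuousAt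
  obtain ⟨_, hN, hNM, 𝒞, h𝒞, hcell, rfl⟩ :=
    hE ((fun p : (analyticSubalgebra E)[X] => (p.leadingCoeff : E → ℝ)) '' T)
      (T.finite_toSet.image _) (by rintro _ ⟨p, _, rfl⟩; exact p.leadingCoeff.2) _
      (inter_mem hM hcont)
  refine ⟨⋃₀ 𝒞 ×ˢ Icc (-δ) δ,
    prod_mem_nhds hN (Icc_mem_nhds (neg_lt_zero.2 hδ) hδ), ?_, ?_⟩
  · exact (prod_mono (hNM.trans inter_subset_left) hδD).trans hMD
  rw [sUnion_eq_biUnion, iUnion₂_prod_const]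
  have hdecomp : ∀ B ∈ 𝒞, HasCellDecomposition (evalPolynomial '' T) (B ×ˢ Icc (-δ) δ) := by
    refine fun B hB => hasCellDecomposition_prod_Icc (hcell B hB).1 hT (fun p hp i => ?_)
      (hcell B hB).2 (neg_lt_self hδ) (hends (by simp [endpoint])) (hends (by simp [endpoint]))
    by_cases hi : i ∈ p.support
    · exact fun x hx => ((hNM (mem_sUnion_of_mem hx hB)).2 p hp i hi).continuousWithinAt
    · rw [notMem_support_iff.1 hi]
      exact continuousOn_const
  refine (HasCellDecomposition.biUnion h𝒞 hdecomp).of_forall_exists_iff ?_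
  exact fun f hf => ⟨f, image_mono hF hf, fun _ _ => .rfl⟩

theorem hasLocalCellDecomposition_prod_real
    (hE : ∀ 𝓖 : Set (E → ℝ), 𝓖.Finite → (∀ g ∈ 𝓖, AnalyticAt ℝ g 0) →
      HasLocalCellDecomposition 𝓖 0)
    {𝓕 : Set (E × ℝ → ℝ)} (hfin : 𝓕.Finite) (han : ∀ f ∈ 𝓕, AnalyticAt ℝ f 0)
    (hreg : ∀ f ∈ 𝓕, f =ᶠ[𝓝 0] 0 ∨ ¬ ∀ᶠ t in 𝓝 (0 : ℝ), f (0, t) = 0) :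
    HasLocalCellDecomposition 𝓕 0 := by
  classical
  have hpoly : ∀ f ∈ 𝓕, ∃ P : (analyticSubalgebra E)[X],
      ∀ᶠ z in 𝓝 0, f z = 0 ↔ evalPolynomial P z = 0 := by
    refine fun f hf => (hreg f hf).elim (fun h => ⟨0, h.mono fun z hz => ?_⟩)
      (exists_polynomial_eq_zero_iff (han f hf))
    simp [evalPolynomial, hz]
  choose! P hP using hpoly
  intro O hO
  obtain ⟨N, hN, hNO, hcell⟩ := hasLocalCellDecomposition_evalPolynomial hE (hfin.toFinset.image P)
    _ (inter_mem hO ((eventually_all_finite hfin).2 hP))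
  refine ⟨N, hN, hNO.trans inter_subset_left, hcell.of_forall_exists_iff fun f hf => ?_⟩
  refine ⟨evalPolynomial (P f), mem_image_of_mem _ (by simpa using mem_image_of_mem P hf), ?_⟩
  exact fun z hz => (hNO hz).2 f hf

theorem exists_mem_forall_analytic_ne_zero {B : Set E} (hB : IsPreconnected B) {V : Set E}
    (hV : IsOpen V) (hVne : V.Nonempty) (hVB : V ⊆ B) {𝓕 : Set (E → ℝ)} (hfin : 𝓕.Finite)
    (han : ∀ f ∈ 𝓕, AnalyticOnNhd ℝ f B) (hne : ∀ f ∈ 𝓕, ¬ EqOn f 0 B) :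
    ∃ y ∈ V, ∀ f ∈ 𝓕, f y ≠ 0 := by
  induction 𝓕, hfin using Set.Finite.induction_on generalizing V with
  | empty => exact hVne.imp fun _ hy => ⟨hy, by simp⟩
  | @insert f 𝓕 _ _ ih =>
    rw [forall_mem_insert] at han hne
    have hsub : V ∩ f ⁻¹' {0}ᶜ ⊆ V := inter_subset_left
    have hopen : IsOpen (V ∩ f ⁻¹' {0}ᶜ) :=
      (han.1.continuousOn.mono hVB).isOpen_inter_preimage hV isOpen_compl_singleton
    have hnonempty : (V ∩ f ⁻¹' {0}ᶜ).Nonempty := by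
      by_contra hempty
      obtain ⟨x, hx⟩ := hVne
      refine hne.1 (han.1.eqOn_zero_of_preconnected_of_eventuallyEq_zero hB (hVB hx) ?_)
      filter_upwards [hV.mem_nhds hx] with z hz
      exact by_contra fun hfz => hempty ⟨z, hz, hfz⟩
    obtain ⟨y, hy, hy𝓕⟩ := ih hopen hnonempty (hsub.trans hVB) han.2 hne.2
    exact ⟨y, hy.1, forall_mem_insert.2 ⟨hy.2, hy𝓕⟩⟩

theorem exists_direction_not_eventually_eq_zero [Nontrivial E] {𝓕 : Set (E → ℝ)} (hfin : 𝓕.Finite)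
    (han : ∀ f ∈ 𝓕, AnalyticAt ℝ f 0) (hne : ∀ f ∈ 𝓕, ¬ f =ᶠ[𝓝 0] 0) :
    ∃ y ≠ 0, ∀ f ∈ 𝓕, ¬ ∀ᶠ t in 𝓝 (0 : ℝ), f (t • y) = 0 := by
  obtain ⟨r, hr, hball⟩ := eventually_nhds_iff_ball.1
    ((eventually_all_finite hfin).2 fun f hf => (han f hf).eventually_analyticAt)
  have hpunctured : (ball (0 : E) r ∩ {0}ᶜ).Nonempty :=
    nonempty_of_mem <|
      inter_mem (mem_nhdsWithin_of_mem_nhds (ball_mem_nhds 0 hr)) self_mem_nhdsWithin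
  obtain ⟨y, ⟨hyr, hy0⟩, hy⟩ := exists_mem_forall_analytic_ne_zero
    (convex_ball (0 : E) r).isPreconnected (isOpen_ball.inter isOpen_compl_singleton) hpunctured
    inter_subset_left hfin (fun f hf x hx => hball x hx f hf)
    fun f hf h => hne f hf (h.eventuallyEq_of_mem (ball_mem_nhds 0 hr))
  refine ⟨y, hy0, fun f hf hzero => hy f hf ?_⟩
  have hline : AnalyticOnNhd ℝ (fun t : ℝ => f (t • y)) (Icc 0 1) := fun t ht =>
    AnalyticAt.comp (g := f) (hball _ ((convex_ball (0 : E) r).starConvex (mem_ball_self hr)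
      |>.smul_mem hyr ht.1 ht.2) f hf) ((ContinuousLinearMap.toSpanSingleton ℝ y).analyticAt t)
  simpa using hline.eqOn_zero_of_preconnected_of_eventuallyEq_zero isPreconnected_Icc
    (left_mem_Icc.2 zero_le_one) hzero (right_mem_Icc.2 zero_le_one)

theorem exists_continuousLinearEquiv_prod_real [FiniteDimensional ℝ E] {y : E} (hy : y ≠ 0) :
    ∃ (E' : Submodule ℝ E) (e : (E' × ℝ) ≃L[ℝ] E),
      Module.finrank ℝ E' + 1 = Module.finrank ℝ E ∧ ∀ t, e (0, t) = t • y := by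
  obtain ⟨E', hE'⟩ := Submodule.exists_isCompl (ℝ ∙ y)
  let e : (E' × ℝ) ≃ₗ[ℝ] E :=
    ((LinearEquiv.refl ℝ E').prodCongr (LinearEquiv.toSpanNonzeroSingleton ℝ E y hy)).trans
      (Submodule.prodEquivOfIsCompl E' (ℝ ∙ y) hE'.symm)
  refine ⟨E', e.toContinuousLinearEquiv, ?_, fun t => by simp [e]⟩
  rw [← Submodule.finrank_add_eq_of_isCompl hE', finrank_span_singleton hy, add_comm]

theorem hasLocalCellDecomposition_zero_of_analyticAt [FiniteDimensional ℝ E] {𝓕 : Set (E → ℝ)}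
    (hfin : 𝓕.Finite) (han : ∀ f ∈ 𝓕, AnalyticAt ℝ f 0) : HasLocalCellDecomposition 𝓕 0 := by
  induction hn : Module.finrank ℝ E generalizing E with
  | zero =>
    have : Subsingleton E := Module.finrank_zero_iff.1 hn
    refine fun O hO => ⟨O, hO, subset_rfl, {O}, finite_singleton O, ?_, sUnion_singleton O⟩
    rintro _ rfl
    refine ⟨subsingleton_of_subsingleton.isPreconnected, fun f _ => ?_⟩
    refine (eq_or_ne (f 0) 0).imp ?_ ?_ <;> exact fun h x _ => Subsingleton.elim 0 x ▸ h
  | succ n ih =>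
    have : Nontrivial E := Module.nontrivial_of_finrank_pos (R := ℝ) (by omega)
    obtain ⟨y, hy0, hy⟩ := exists_direction_not_eventually_eq_zero
      (hfin.subset (sep_subset 𝓕 fun f => ¬ f =ᶠ[𝓝 0] 0)) (fun f hf => han f hf.1) fun f hf => hf.2
    obtain ⟨E', e, hrank, he⟩ := exists_continuousLinearEquiv_prod_real hy0
    have he0 : Tendsto e (𝓝 0) (𝓝 0) := e.continuous.tendsto' _ _ (map_zero e)
    rw [← map_zero e]
    refine .of_homeomorph e.toHomeomorph (hasLocalCellDecomposition_prod_real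
      (fun 𝓖 h𝓖 hg => ih h𝓖 hg (by omega)) (hfin.image _) ?_ ?_)
    · rintro _ ⟨f, hf, rfl⟩
      exact AnalyticAt.comp (g := f) (x := 0) (by simpa using han f hf)
        ((e : (E' × ℝ) →L[ℝ] E).analyticAt 0)
    · rintro _ ⟨f, hf, rfl⟩
      by_cases hf0 : f =ᶠ[𝓝 0] 0
      · exact .inl (he0.eventually hf0)
      · exact .inr (by simpa [he] using hy f ⟨hf, hf0⟩)

theorem exists_isPreconnected_of_analyticAt_eq_zero [FiniteDimensional ℝ E] {ρ : E → ℝ} {p : E}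
    (hρ : AnalyticAt ℝ ρ p) (hp : ρ p = 0) {O : Set E} (hO : O ∈ 𝓝 p) :
    ∃ N ∈ 𝓝 p, ∀ z ∈ N, ρ z = 0 →
      ∃ S, IsPreconnected S ∧ p ∈ S ∧ z ∈ S ∧ S ⊆ O ∩ {w | ρ w = 0} := by
  have htranslate : AnalyticAt ℝ (fun x => ρ (p + x)) 0 :=
    AnalyticAt.comp (g := ρ) (x := 0) (by simpa using hρ) (analyticAt_const.add analyticAt_id)
  have hlocal : HasLocalCellDecomposition {ρ} (Homeomorph.addLeft p 0) := by
    refine .of_homeomorph _ (hasLocalCellDecomposition_zero_of_analyticAt ?_ ?_)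
    · exact (finite_singleton ρ).image _
    · simpa using! htranslate
  rw [show Homeomorph.addLeft p 0 = p from add_zero p] at hlocal
  exact hlocal.exists_isPreconnected_of_eq_zero hp hO

end Stratification

section CauchyPompeiu

open MeasureTheory Filter Topology

/-- The Wirtinger derivative `∂g/∂ξ̄` of a real-differentiable function of one complex variable. -/
def dbar (g : ℂ → ℂ) (ξ : ℂ) : ℂ :=
  (1 / 2) * (fderiv ℝ g ξ 1 + Complex.I * fderiv ℝ g ξ Complex.I)

variable {g k : ℂ → ℂ} {ξ : ℂ}

theorem dbar_congr (h : g =ᶠ[𝓝 ξ] k) : dbar g ξ = dbar k ξ := by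
  rw [dbar, dbar, h.fderiv_eq]

theorem dbar_const (c : ℂ) (ξ : ℂ) : dbar (fun _ => c) ξ = 0 := by
  simp [dbar]

theorem dbar_eq_zero_of_eventuallyEq_const {c : ℂ} (h : g =ᶠ[𝓝 ξ] fun _ => c) :
    dbar g ξ = 0 := by
  rw [dbar_congr h, dbar_const]

theorem dbar_sub (hg : DifferentiableAt ℝ g ξ) (hk : DifferentiableAt ℝ k ξ) :
    dbar (fun x => g x - k x) ξ = dbar g ξ - dbar k ξ := by
  simp only [dbar, fderiv_fun_sub hg hk, sub_apply]
  ring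

theorem dbar_mul_of_differentiableAt {c : ℂ → ℂ} (hc : DifferentiableAt ℂ c ξ)
    (hk : DifferentiableAt ℝ k ξ) : dbar (fun x => c x * k x) ξ = c ξ * dbar k ξ := by
  have hcI : fderiv ℝ c ξ Complex.I = Complex.I * fderiv ℝ c ξ 1 := by
    simp [hc.fderiv_restrictScalars ℝ]
  simp only [dbar, fderiv_fun_mul (hc.restrictScalars ℝ) hk, add_apply, smul_apply,
    smul_eq_mul, hcI]
  linear_combination (1 / 2 * k ξ * fderiv ℝ c ξ 1) * Complex.I_mul_I

theorem continuousAt_dbar (hg : ContDiffAt ℝ 1 g ξ) : ContinuousAt (dbar g) ξ := by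
  have h : ContinuousAt (fderiv ℝ g) ξ := hg.continuousAt_fderiv one_ne_zero
  exact continuousAt_const.mul ((h.clm_apply continuousAt_const).add
    (continuousAt_const.mul (h.clm_apply continuousAt_const)))

open ComplexConjugate in
/-- In polar coordinates `2 e^{iθ} ∂/∂ξ̄ = ∂/∂s + (i/s) ∂/∂θ`, with `w = e^{iθ}`. -/
theorem dbar_mul_two_mul_conj (g : ℂ → ℂ) (ξ w : ℂ) :
    2 * conj w * dbar g ξ = fderiv ℝ g ξ w + Complex.I * fderiv ℝ g ξ (Complex.I * w) := by
  have hw : fderiv ℝ g ξ w = w.re * fderiv ℝ g ξ 1 + w.im * fderiv ℝ g ξ Complex.I := by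
    conv_lhs => rw [show w = w.re • (1 : ℂ) + w.im • Complex.I by simp]
    rw [map_add, map_smul, map_smul, Complex.real_smul, Complex.real_smul]
  have hIw : fderiv ℝ g ξ (Complex.I * w) =
      w.re * fderiv ℝ g ξ Complex.I - w.im * fderiv ℝ g ξ 1 := by
    rw [show Complex.I * w = w.re • Complex.I - w.im • (1 : ℂ) by apply Complex.ext <;> simp]
    rw [map_sub, map_smul, map_smul, Complex.real_smul, Complex.real_smul]
  have hconj : conj w = w.re - w.im * Complex.I := by
    apply Complex.ext <;> simp
  rw [hw, hIw, hconj, dbar]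
  linear_combination (-w.im * fderiv ℝ g ξ Complex.I) * Complex.I_mul_I

theorem hasDerivAt_comp_radial (hg : Differentiable ℝ g) (w : ℂ) (s : ℝ) :
    HasDerivAt (fun s : ℝ => g (s * w)) (fderiv ℝ g (s * w) w) s := by
  have h : HasDerivAt (fun s : ℝ => (s : ℂ) * w) w s := by
    simpa using (Complex.ofRealCLM.hasDerivAt (x := s)).mul_const w
  exact (hg _).hasFDerivAt.comp_hasDerivAt s h

theorem hasDerivAt_comp_angular (hg : Differentiable ℝ g) (s θ : ℝ) :
    HasDerivAt (fun θ : ℝ => g (s * Complex.exp (θ * Complex.I)))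
      (s * fderiv ℝ g (s * Complex.exp (θ * Complex.I)) (Complex.I * Complex.exp (θ * Complex.I)))
      θ := by
  have h : HasDerivAt (fun θ : ℝ => (s : ℂ) * Complex.exp (θ * Complex.I))
      (s • (Complex.I * Complex.exp (θ * Complex.I))) θ := by
    have hθ := ((Complex.ofRealCLM.hasDerivAt (x := θ)).mul_const Complex.I).cexp.const_mul (s : ℂ)
    simpa [mul_comm] using hθ
  rw [← Complex.real_smul, ← map_smul]
  exact (hg _).hasFDerivAt.comp_hasDerivAt θ h

theorem integral_Ioi_fderiv_radial (hg : ContDiff ℝ 1 g) (hs : HasCompactSupport g) {w : ℂ}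
    (hw : w ≠ 0) : ∫ s in Set.Ioi (0 : ℝ), fderiv ℝ g (s * w) w = -g 0 := by
  have hray : IsClosedEmbedding fun s : ℝ => (s : ℂ) * w :=
    (Homeomorph.mulRight₀ w hw).isClosedEmbedding.comp Complex.isometry_ofReal.isClosedEmbedding
  have hg' : ContDiff ℝ 1 fun s : ℝ => g (s * w) :=
    hg.comp (Complex.ofRealCLM.contDiff.mul contDiff_const)
  have h := (hs.comp_isClosedEmbedding hray).integral_Ioi_deriv_eq hg' 0
  have hderiv (s : ℝ) := (hasDerivAt_comp_radial (hg.differentiable one_ne_zero) w s).deriv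
  simpa [Function.comp_def, hderiv] using h

theorem integral_Ioo_fderiv_angular (hg : ContDiff ℝ 1 g) {s : ℝ} (hs : s ≠ 0) :
    ∫ θ in Set.Ioo (-Real.pi) Real.pi, fderiv ℝ g (s * Complex.exp (θ * Complex.I))
      (Complex.I * Complex.exp (θ * Complex.I)) = 0 := by
  have hint : ∫ θ in (-Real.pi)..Real.pi, (s : ℂ) * fderiv ℝ g (s * Complex.exp (θ * Complex.I))
      (Complex.I * Complex.exp (θ * Complex.I)) = 0 := by
    rw [intervalIntegral.integral_eq_sub_of_hasDerivAt
      (fun θ _ => hasDerivAt_comp_angular (hg.differentiable one_ne_zero) s θ)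
      (Continuous.intervalIntegrable (by fun_prop) _ _)]
    simp [Complex.exp_neg]
  rw [intervalIntegral.integral_const_mul, mul_eq_zero] at hint
  rw [← integral_Ioc_eq_integral_Ioo, ← intervalIntegral.integral_of_le (by linarith [Real.pi_pos])]
  exact hint.resolve_left (by exact_mod_cast hs)

/-- The support condition is only asked for large `s`, which is all that polar coordinates see. -/
theorem integrableOn_Ioi_prod_Ioo {D : ℝ × ℝ → ℂ} (hD : Continuous D) {M : ℝ}
    (hM : ∀ s θ : ℝ, M < s → D (s, θ) = 0) (a b c : ℝ) :
    IntegrableOn D (Set.Ioi a ×ˢ Set.Ioo b c) (volume.prod volume) := by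
  have h : IntegrableOn D (Set.Icc a M ×ˢ Set.Icc b c) (volume.prod volume) :=
    hD.continuousOn.integrableOn_compact (isCompact_Icc.prod isCompact_Icc)
  refine h.of_forall_sdiff_eq_zero (measurableSet_Ioi.prod measurableSet_Ioo) ?_
  rintro ⟨s, θ⟩ ⟨⟨hs, hθ⟩, hn⟩
  refine hM s θ (not_le.1 fun hsM => hn ⟨⟨le_of_lt hs, hsM⟩, hθ.1.le, hθ.2.le⟩)

theorem exists_fderiv_polar_eq_zero (hs : HasCompactSupport g) :
    ∃ M : ℝ, ∀ s θ : ℝ, M < s → fderiv ℝ g (s * Complex.exp (θ * Complex.I)) = 0 := by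
  obtain ⟨M, hM⟩ := (hs.fderiv (𝕜 := ℝ)).isCompact.isBounded.exists_norm_le
  refine ⟨M, fun s θ hMs => image_eq_zero_of_notMem_tsupport fun hmem => ?_⟩
  have := hM _ hmem
  rw [norm_mul, Complex.norm_exp_ofReal_mul_I, mul_one, Complex.norm_real] at this
  exact absurd ((le_abs_self s).trans this) (not_le.2 hMs)

theorem smul_dbar_div_polarCoord_symm (g : ℂ → ℂ) {q : ℝ × ℝ} (hq : q.1 ≠ 0) :
    q.1 • (dbar g (Complex.polarCoord.symm q) / Complex.polarCoord.symm q) =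
      (1 / 2) * fderiv ℝ g (q.1 * Complex.exp (q.2 * Complex.I)) (Complex.exp (q.2 * Complex.I)) +
      (Complex.I / 2) * fderiv ℝ g (q.1 * Complex.exp (q.2 * Complex.I))
        (Complex.I * Complex.exp (q.2 * Complex.I)) := by
  have hpolar : Complex.polarCoord.symm q = q.1 * Complex.exp (q.2 * Complex.I) := by
    rw [Complex.polarCoord_symm_apply, Complex.exp_mul_I]
    push_cast
    rfl
  have hconj : (starRingEnd ℂ) (Complex.exp (q.2 * Complex.I)) =
      (Complex.exp (q.2 * Complex.I))⁻¹ := by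
    simp [← Complex.exp_conj, ← Complex.exp_neg]
  have hdbar := dbar_mul_two_mul_conj g (q.1 * Complex.exp (q.2 * Complex.I))
    (Complex.exp (q.2 * Complex.I))
  have hq' : (q.1 : ℂ) ≠ 0 := by exact_mod_cast hq
  rw [hconj] at hdbar
  rw [hpolar, Complex.real_smul, mul_div_assoc', mul_div_mul_left _ _ hq', div_eq_mul_inv]
  linear_combination (1 / 2) * hdbar

theorem integral_dbar_div (hg : ContDiff ℝ 1 g) (hs : HasCompactSupport g) :
    ∫ ξ, dbar g ξ / ξ = -Real.pi * g 0 := by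
  obtain ⟨M, hM⟩ := exists_fderiv_polar_eq_zero hs
  set A : ℝ × ℝ → ℂ := fun q =>
    fderiv ℝ g (q.1 * Complex.exp (q.2 * Complex.I)) (Complex.exp (q.2 * Complex.I)) with hA
  set B : ℝ × ℝ → ℂ := fun q => fderiv ℝ g (q.1 * Complex.exp (q.2 * Complex.I))
    (Complex.I * Complex.exp (q.2 * Complex.I)) with hB
  have hAint := integrableOn_Ioi_prod_Ioo (D := A) (M := M) (by fun_prop)
    (fun s θ h => by simp [hA, hM s θ h]) 0 (-Real.pi) Real.pi
  have hBint := integrableOn_Ioi_prod_Ioo (D := B) (M := M) (by fun_prop)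
    (fun s θ h => by simp [hB, hM s θ h]) 0 (-Real.pi) Real.pi
  have hradial : ∫ q in Set.Ioi 0 ×ˢ Set.Ioo (-Real.pi) Real.pi, A q ∂(volume.prod volume) =
      -(2 * Real.pi) * g 0 := by
    rw [← setIntegral_prod_swap, setIntegral_prod (fun q : ℝ × ℝ => A q.swap) hAint.swap]
    simp only [hA, Prod.swap_prod_mk, integral_Ioi_fderiv_radial hg hs (Complex.exp_ne_zero _),
      setIntegral_const, Real.volume_real_Ioo_of_le (neg_le_self Real.pi_pos.le), Complex.real_smul]
    push_cast
    ring
  have hangular :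
      ∫ q in Set.Ioi 0 ×ˢ Set.Ioo (-Real.pi) Real.pi, B q ∂(volume.prod volume) = 0 := by
    rw [setIntegral_prod _ hBint]
    exact setIntegral_eq_zero_of_forall_eq_zero fun s hs =>
      integral_Ioo_fderiv_angular hg (ne_of_gt hs)
  calc ∫ ξ, dbar g ξ / ξ
      = ∫ q in Set.Ioi 0 ×ˢ Set.Ioo (-Real.pi) Real.pi,
          (1 / 2) * A q + (Complex.I / 2) * B q ∂(volume.prod volume) := by
        rw [← Complex.integral_comp_polarCoord_symm]
        exact setIntegral_congr_fun (measurableSet_Ioi.prod measurableSet_Ioo) fun q hq =>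
          smul_dbar_div_polarCoord_symm g (ne_of_gt hq.1)
    _ = -Real.pi * g 0 := by
        rw [integral_add (hAint.const_mul _) (hBint.const_mul _), integral_const_mul,
          integral_const_mul, hradial, hangular]
        ring

end CauchyPompeiu

section TranslatedIntegrals

open MeasureTheory Filter Topology

variable {E : Type*} [NormedAddCommGroup E] [NormedSpace ℂ E]

/-- The largest open set on which `f` is holomorphic. -/
def holomorphyDomain (f : E → ℂ) : Set E :=
  interior {u | DifferentiableAt ℂ f u}

variable {f : E → ℂ} {z : E} {L : Set E}

theorem isOpen_holomorphyDomain (f : E → ℂ) : IsOpen (holomorphyDomain f) :=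
  isOpen_interior

theorem differentiableAt_of_mem_holomorphyDomain (h : z ∈ holomorphyDomain f) :
    DifferentiableAt ℂ f z :=
  interior_subset (s := {u | DifferentiableAt ℂ f u}) h

theorem continuousOn_holomorphyDomain (f : E → ℂ) : ContinuousOn f (holomorphyDomain f) :=
  fun _ hu => (differentiableAt_of_mem_holomorphyDomain hu).continuousAt.continuousWithinAt

theorem exists_ball_subset_holomorphyDomain_of_isCompact [ProperSpace E] (hL : IsCompact L)
    (hf : ∀ u ∈ L, z + u ∈ holomorphyDomain f) :
    ∃ δ > 0, ∃ M, ∀ u ∈ L, ∀ v, dist v (z + u) < δ → v ∈ holomorphyDomain f ∧ ‖f v‖ ≤ M := by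
  have hzL : IsCompact ((z + ·) '' L) := hL.image (continuous_const_add z)
  obtain ⟨δ, hδ, hsub⟩ := hzL.exists_cthickening_subset_open (isOpen_holomorphyDomain f)
    (Set.image_subset_iff.2 hf)
  obtain ⟨M, hM⟩ := hzL.cthickening.exists_bound_of_continuousOn
    ((continuousOn_holomorphyDomain f).mono hsub)
  refine ⟨δ, hδ, M, fun u hu v hv => ?_⟩
  have hmem : v ∈ cthickening δ ((z + ·) '' L) :=
    mem_cthickening_of_dist_le v _ δ _ (Set.mem_image_of_mem _ hu) hv.le
  exact ⟨hsub hmem, hM v hmem⟩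

variable {α : Type*} [MeasurableSpace α] {μ : Measure α} {k : α → ℂ} {ψ : α → E}
  [MeasurableSpace E] [BorelSpace E] [FiniteDimensional ℂ E]

theorem integrable_mul_comp_add (hL : IsCompact L) (hk : Integrable k μ) (hψ : AEMeasurable ψ μ)
    (hkL : ∀ᵐ a ∂μ, k a ≠ 0 → ψ a ∈ L) (hf : ∀ u ∈ L, z + u ∈ holomorphyDomain f) :
    Integrable (fun a => k a * f (z + ψ a)) μ := by
  classical
  have := FiniteDimensional.proper ℂ E
  obtain ⟨δ, hδ, M, hM⟩ := exists_ball_subset_holomorphyDomain_of_isCompact hL hf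
  have hmeas : Measurable ((holomorphyDomain f).indicator f) := by
    rw [← Set.piecewise_eq_indicator]
    exact (continuousOn_holomorphyDomain f).measurable_piecewise continuousOn_const
      (isOpen_holomorphyDomain f).measurableSet
  have heq : (fun a => k a * (holomorphyDomain f).indicator f (z + ψ a)) =ᵐ[μ]
      fun a => k a * f (z + ψ a) := by
    filter_upwards [hkL] with a ha
    by_cases hka : k a = 0
    · simp [hka]
    · rw [Set.indicator_of_mem (hf _ (ha hka))]
  refine (hk.norm.mul_const M).mono' (AEStronglyMeasurable.congr
    (hk.aestronglyMeasurable.mul (hmeas.comp_aemeasurable (hψ.const_add z)).aestronglyMeasurable)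
    heq) ?_
  filter_upwards [hkL] with a ha
  rw [norm_mul]
  by_cases hka : k a = 0
  · simp [hka]
  · gcongr
    exact (hM _ (ha hka) _ (by simpa using hδ)).2

/-- Cauchy's estimate dominates the derivative of the integrand. -/
theorem differentiableAt_integral_mul_comp_add (hL : IsCompact L) (hk : Integrable k μ)
    (hψ : AEMeasurable ψ μ) (hkL : ∀ᵐ a ∂μ, k a ≠ 0 → ψ a ∈ L)
    (hf : ∀ u ∈ L, z + u ∈ holomorphyDomain f) :
    DifferentiableAt ℂ (fun w => ∫ a, k a * f (w + ψ a) ∂μ) z := by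
  have := FiniteDimensional.proper ℂ E
  have := FiniteDimensional.proper ℂ (E →L[ℂ] ℂ)
  obtain ⟨δ, hδ, M, hM⟩ := exists_ball_subset_holomorphyDomain_of_isCompact hL hf
  have hδ2 : 0 < δ / 2 := half_pos hδ
  have hnear {u w : E} (hu : u ∈ L) (hw : w ∈ ball z (δ / 2)) {v : E}
      (hv : v ∈ ball (w + u) (δ / 2)) : v ∈ holomorphyDomain f ∧ ‖f v‖ ≤ M := by
    refine hM u hu v ?_
    have htri := dist_triangle v (w + u) (z + u)
    rw [dist_add_right] at htri
    linarith [mem_ball.1 hw, mem_ball.1 hv]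
  have hcauchy {u w : E} (hu : u ∈ L) (hw : w ∈ ball z (δ / 2)) :
      ‖fderiv ℂ f (w + u)‖ ≤ (M + M) / (δ / 2) := by
    refine Complex.norm_fderiv_le_div_of_mapsTo_ball (fun v hv =>
      (differentiableAt_of_mem_holomorphyDomain (hnear hu hw hv).1).differentiableWithinAt)
      (fun v hv => ?_) hδ2
    exact (dist_le_norm_add_norm _ _).trans
      (add_le_add (hnear hu hw hv).2 (hnear hu hw (mem_ball_self hδ2)).2)
  refine (hasFDerivAt_integral_of_dominated_of_fderiv_le
    (F' := fun w a => k a • fderiv ℂ f (w + ψ a)) (bound := fun a => ‖k a‖ * ((M + M) / (δ / 2)))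
    (ball_mem_nhds z hδ2) ?_ (integrable_mul_comp_add hL hk hψ hkL hf) ?_ ?_
    (hk.norm.mul_const _) ?_).differentiableAt
  · filter_upwards [ball_mem_nhds z hδ2] with w hw
    exact (integrable_mul_comp_add hL hk hψ hkL fun u hu =>
      (hnear hu hw (mem_ball_self hδ2)).1).aestronglyMeasurable
  · exact hk.aestronglyMeasurable.smul
      ((measurable_fderiv ℂ f).comp_aemeasurable (hψ.const_add z)).aestronglyMeasurable
  · filter_upwards [hkL] with a ha w hw
    rw [norm_smul]
    by_cases hka : k a = 0
    · simp [hka]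
    · gcongr
      exact hcauchy (ha hka) hw
  · filter_upwards [hkL] with a ha w hw
    by_cases hka : k a = 0
    · simp only [hka, zero_mul]
      exact (hasFDerivAt_const (0 : ℂ) w).congr_fderiv (zero_smul ℂ (fderiv ℂ f (w + ψ a))).symm
    · have hfd := (differentiableAt_of_mem_holomorphyDomain
        (hnear (ha hka) hw (mem_ball_self hδ2)).1).hasFDerivAt
      exact ((hasFDerivAt_comp_add_right (ψ a)).2 hfd).const_mul (k a)

end TranslatedIntegrals

section DiscIntegral

open MeasureTheory Filter Topology

theorem integrableOn_inv_closedBall (r : ℝ) :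
    IntegrableOn (fun ξ : ℂ => ξ⁻¹) (closedBall (0 : ℂ) r) := by
  have hnorm : IntegrableOn (fun x : ℂ => ‖x‖⁻¹) (ball (0 : ℂ) (r + 1)) := by
    rw [integrableOn_fun_norm_addHaar (μ := volume) (f := fun y : ℝ => y⁻¹),
      Complex.finrank_real_complex]
    refine IntegrableOn.congr_fun (f := fun _ => (1 : ℝ)) (integrableOn_const (by simp))
      (fun y hy => ?_) measurableSet_Ioo
    simp [(ne_of_gt hy.1 : y ≠ 0)]
  refine (hnorm.mono_set (closedBall_subset_ball (lt_add_one r))).mono'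
    measurable_inv.aestronglyMeasurable (Eventually.of_forall fun x => ?_)
  rw [norm_inv]

theorem dbar_mul_of_differentiableAt_or {c κ : ℂ → ℂ} {ξ : ℂ} (hκ : DifferentiableAt ℝ κ ξ)
    (hc : DifferentiableAt ℂ c ξ ∨ κ =ᶠ[𝓝 ξ] fun _ => 0) :
    dbar (fun x => c x * κ x) ξ = c ξ * dbar κ ξ := by
  rcases hc with hc | hκ0
  · exact dbar_mul_of_differentiableAt hc hκ
  · have hprod : (fun x => c x * κ x) =ᶠ[𝓝 ξ] fun _ => 0 := by
      filter_upwards [hκ0] with x hx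
      rw [hx, mul_zero]
    rw [dbar_eq_zero_of_eventuallyEq_const hprod, dbar_eq_zero_of_eventuallyEq_const hκ0, mul_zero]

theorem contDiffAt_mul_of_analyticAt_or {c κ : ℂ → ℂ} {ξ : ℂ} (hκ : ContDiffAt ℝ 1 κ ξ)
    (hc : AnalyticAt ℂ c ξ ∨ κ =ᶠ[𝓝 ξ] fun _ => 0) : ContDiffAt ℝ 1 (fun x => c x * κ x) ξ := by
  rcases hc with hc | hκ0
  · exact (hc.restrictScalars (𝕜 := ℝ)).contDiffAt.mul hκ
  · refine (contDiffAt_const (c := (0 : ℂ))).congr_of_eventuallyEq ?_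
    filter_upwards [hκ0] with x hx
    rw [hx, mul_zero]

theorem setIntegral_ball_mul_dbar_div {c κ : ℂ → ℂ} {s r : ℝ} (hr : 0 < r) (hsr : s < r)
    (hκ : ∀ ξ ∈ ball (0 : ℂ) r, ContDiffAt ℝ 1 κ ξ)
    (hc : ∀ ξ ∈ ball (0 : ℂ) r, AnalyticAt ℂ c ξ ∨ κ =ᶠ[𝓝 ξ] fun _ => 0)
    (hκ0 : ∀ ξ ∈ ball (0 : ℂ) r, s < ‖ξ‖ → κ ξ = 0) :
    ∫ ξ in ball (0 : ℂ) r, c ξ * dbar κ ξ / ξ = -Real.pi * (c 0 * κ 0) := by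
  set g : ℂ → ℂ := (ball (0 : ℂ) r).indicator fun x => c x * κ x
  have hin : ∀ ξ ∈ ball (0 : ℂ) r, g =ᶠ[𝓝 ξ] fun x => c x * κ x := fun ξ hξ =>
    (Set.eqOn_indicator).eventuallyEq_of_mem (isOpen_ball.mem_nhds hξ)
  have hout : ∀ ξ : ℂ, s < ‖ξ‖ → g ξ = 0 := fun ξ hξ =>
    Set.indicator_apply_eq_zero.2 fun hmem => by rw [hκ0 ξ hmem hξ, mul_zero]
  have hout' : ∀ ξ ∉ ball (0 : ℂ) r, g =ᶠ[𝓝 ξ] fun _ => 0 := fun ξ hξ => by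
    have hsξ : s < ‖ξ‖ := hsr.trans_le (by simpa using hξ)
    filter_upwards [(isOpen_lt continuous_const continuous_norm).mem_nhds hsξ] with x hx
    exact hout x hx
  have hsmooth : ContDiff ℝ 1 g := contDiff_iff_contDiffAt.2 fun ξ => by
    by_cases hξ : ξ ∈ ball (0 : ℂ) r
    · exact (contDiffAt_mul_of_analyticAt_or (hκ ξ hξ) (hc ξ hξ)).congr_of_eventuallyEq (hin ξ hξ)
    · exact contDiffAt_const.congr_of_eventuallyEq (hout' ξ hξ)
  have hcompact : HasCompactSupport g :=
    .of_support_subset_isCompact (isCompact_closedBall (0 : ℂ) s) fun ξ hξ =>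
      mem_closedBall_zero_iff.2 (not_lt.1 fun hsξ => hξ (hout ξ hsξ))
  have hdbar :
      (ball (0 : ℂ) r).indicator (fun ξ => c ξ * dbar κ ξ / ξ) = fun ξ => dbar g ξ / ξ := by
    funext ξ
    by_cases hξ : ξ ∈ ball (0 : ℂ) r
    · rw [Set.indicator_of_mem hξ, dbar_congr (hin ξ hξ), dbar_mul_of_differentiableAt_or
        ((hκ ξ hξ).differentiableAt one_ne_zero) ((hc ξ hξ).imp_left (·.differentiableAt))]
    · rw [Set.indicator_of_notMem hξ, dbar_eq_zero_of_eventuallyEq_const (hout' ξ hξ), zero_div]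
  rw [← integral_indicator measurableSet_ball, hdbar, integral_dbar_div hsmooth hcompact]
  simp only [g, Set.indicator_of_mem (mem_ball_self hr)]

/-- The singular integral of `f · ∂̄χ` along the translate by `z` of the unit disc `ψ`; by the
Cauchy–Pompeiu formula it equals `-π f(z) χ(z)` when `ψ 0 = 0` and `χ` vanishes near the boundary
of the translated disc. -/
def discIntegral {E : Type*} [Add E] (f χ : E → ℂ) (ψ : ℂ → E) (z : E) : ℂ :=
  ∫ ξ in ball (0 : ℂ) 1, dbar (fun ζ => χ (z + ψ ζ)) ξ / ξ * f (z + ψ ξ)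

theorem discIntegral_const {E : Type*} [Add E] (f : E → ℂ) (c : ℂ) (ψ : ℂ → E) (z : E) :
    discIntegral f (fun _ => c) ψ z = 0 := by
  simp only [discIntegral, dbar_const, zero_div, zero_mul, integral_zero]

variable {E : Type*} [NormedAddCommGroup E] [NormedSpace ℂ E]

variable {f χ χ' : E → ℂ} {ψ : ℂ → E} {z : E}

theorem contDiffAt_comp_add_of_analyticAt [CompleteSpace E] (hχ : ContDiff ℝ 1 χ) {ξ : ℂ}
    (hψ : AnalyticAt ℂ ψ ξ) (z : E) : ContDiffAt ℝ 1 (fun ζ => χ (z + ψ ζ)) ξ :=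
  hχ.contDiffAt.comp ξ (contDiffAt_const.add (hψ.restrictScalars (𝕜 := ℝ)).contDiffAt)

theorem dbar_comp_add_eq_zero {ξ : ℂ} (hψ : AnalyticAt ℂ ψ ξ) (hχ : ContDiff ℝ 1 χ)
    (h : fderiv ℝ χ (z + ψ ξ) = 0) : dbar (fun ζ => χ (z + ψ ζ)) ξ = 0 := by
  have hd : HasFDerivAt (fun ζ => χ (z + ψ ζ)) (0 : ℂ →L[ℝ] ℂ) ξ := by
    have := ((hχ.differentiable one_ne_zero (z + ψ ξ)).hasFDerivAt).comp ξ
      ((hψ.restrictScalars (𝕜 := ℝ)).differentiableAt.hasFDerivAt.const_add z)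
    rwa [h, ContinuousLinearMap.zero_comp] at this
  simp [dbar, hd.fderiv]

theorem integrableOn_dbar_comp_add_div [CompleteSpace E] (hψ : AnalyticOnNhd ℂ ψ (closedBall 0 1))
    (hχ : ContDiff ℝ 1 χ) (z : E) :
    IntegrableOn (fun ξ => dbar (fun ζ => χ (z + ψ ζ)) ξ / ξ) (ball (0 : ℂ) 1) := by
  simp only [div_eq_mul_inv]
  exact ((integrableOn_inv_closedBall 1).continuousOn_mul (fun ξ hξ => (continuousAt_dbar
    (contDiffAt_comp_add_of_analyticAt hχ (hψ ξ hξ) z)).continuousWithinAt)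
    (isCompact_closedBall _ _)).mono_set ball_subset_closedBall

theorem isCompact_image_inter_tsupport_fderiv (hψ : AnalyticOnNhd ℂ ψ (closedBall 0 1)) (χ : E → ℂ)
    (z : E) : IsCompact (ψ '' closedBall 0 1 ∩ (z + ·) ⁻¹' tsupport (fderiv ℝ χ)) :=
  ((isCompact_closedBall 0 1).image_of_continuousOn hψ.continuousOn).inter_right
    ((isClosed_tsupport _).preimage (continuous_const_add z))

theorem mem_of_dbar_comp_add_div_ne_zero (hψ : AnalyticOnNhd ℂ ψ (closedBall 0 1))
    (hχ : ContDiff ℝ 1 χ) (z : E) : ∀ᵐ ξ ∂(volume.restrict (ball (0 : ℂ) 1)),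
      dbar (fun ζ => χ (z + ψ ζ)) ξ / ξ ≠ 0 →
        ψ ξ ∈ ψ '' closedBall 0 1 ∩ (z + ·) ⁻¹' tsupport (fderiv ℝ χ) := by
  filter_upwards [ae_restrict_mem measurableSet_ball] with ξ hξ hne
  have hξ' := ball_subset_closedBall hξ
  refine ⟨Set.mem_image_of_mem ψ hξ', subset_tsupport _ fun h0 => hne ?_⟩
  rw [dbar_comp_add_eq_zero (hψ ξ hξ') hχ h0, zero_div]

theorem notMem_tsupport_fderiv_of_eventuallyEq_const {u : E} {c : ℂ}
    (h : χ =ᶠ[𝓝 u] fun _ => c) : u ∉ tsupport (fderiv ℝ χ) := by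
  rw [notMem_tsupport_iff_eventuallyEq]
  filter_upwards [h.eventuallyEq_nhds] with v hv
  simp [hv.fderiv_eq]

variable [FiniteDimensional ℂ E]

theorem integrableOn_discIntegral (hψ : AnalyticOnNhd ℂ ψ (closedBall 0 1)) (hχ : ContDiff ℝ 1 χ)
    (hf : ∀ ξ ∈ closedBall (0 : ℂ) 1, z + ψ ξ ∈ tsupport (fderiv ℝ χ) →
      z + ψ ξ ∈ holomorphyDomain f) :
    IntegrableOn (fun ξ => dbar (fun ζ => χ (z + ψ ζ)) ξ / ξ * f (z + ψ ξ)) (ball (0 : ℂ) 1) := by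
  have := FiniteDimensional.complete ℂ E
  borelize E
  refine integrable_mul_comp_add (isCompact_image_inter_tsupport_fderiv hψ χ z)
    (integrableOn_dbar_comp_add_div hψ hχ z)
    ((hψ.continuousOn.mono ball_subset_closedBall).aemeasurable measurableSet_ball)
    (mem_of_dbar_comp_add_div_ne_zero hψ hχ z) ?_
  rintro _ ⟨⟨ξ, hξ, rfl⟩, hmem⟩
  exact hf ξ hξ hmem

/-- Translating the cutoff along with the base point freezes the kernel, so only the dependence of
`f (w + ψ ξ)` on `w` remains, and it is holomorphic. -/
theorem differentiableAt_discIntegral_translate (hψ : AnalyticOnNhd ℂ ψ (closedBall 0 1))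
    (hχ : ContDiff ℝ 1 χ)
    (hf : ∀ ξ ∈ closedBall (0 : ℂ) 1, z + ψ ξ ∈ tsupport (fderiv ℝ χ) →
      z + ψ ξ ∈ holomorphyDomain f) :
    DifferentiableAt ℂ (fun w => discIntegral f (fun u => χ (u - (w - z))) ψ w) z := by
  have := FiniteDimensional.complete ℂ E
  borelize E
  have hfreeze (w : E) (ζ : ℂ) : w + ψ ζ - (w - z) = z + ψ ζ := by abel
  simp only [discIntegral, hfreeze]
  refine differentiableAt_integral_mul_comp_add (isCompact_image_inter_tsupport_fderiv hψ χ z)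
    (integrableOn_dbar_comp_add_div hψ hχ z)
    ((hψ.continuousOn.mono ball_subset_closedBall).aemeasurable measurableSet_ball)
    (mem_of_dbar_comp_add_div_ne_zero hψ hχ z) ?_
  rintro _ ⟨⟨ξ, hξ, rfl⟩, hmem⟩
  exact hf ξ hξ hmem

theorem analyticAt_comp_add_of_mem_holomorphyDomain {ξ : ℂ} (hψ : AnalyticAt ℂ ψ ξ)
    (hf : z + ψ ξ ∈ holomorphyDomain f) : AnalyticAt ℂ (fun ζ => f (z + ψ ζ)) ξ := by
  rw [Complex.analyticAt_iff_eventually_differentiableAt]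
  have htendsto : Tendsto (fun ζ => z + ψ ζ) (𝓝 ξ) (𝓝 (z + ψ ξ)) := hψ.continuousAt.const_add z
  filter_upwards [htendsto ((isOpen_holomorphyDomain f).mem_nhds hf),
    hψ.eventually_analyticAt] with x hfx hψx
  exact (differentiableAt_of_mem_holomorphyDomain hfx).comp x (hψx.differentiableAt.const_add z)

/-- Two cutoffs that agree wherever `f` is not known to be holomorphic, and on the outer half of
the disc, have integrals that differ by a residue at the centre. -/
theorem discIntegral_sub_discIntegral (hψ : AnalyticOnNhd ℂ ψ (closedBall 0 1)) (hψ0 : ψ 0 = 0)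
    (hχ : ContDiff ℝ 1 χ) (hχ' : ContDiff ℝ 1 χ')
    (h : ∀ ξ ∈ closedBall (0 : ℂ) 1, z + ψ ξ ∈ holomorphyDomain f ∨
      ∃ c, χ =ᶠ[𝓝 (z + ψ ξ)] (fun _ => c) ∧ χ' =ᶠ[𝓝 (z + ψ ξ)] fun _ => c)
    (houter : ∀ ξ ∈ closedBall (0 : ℂ) 1, 1 / 2 < ‖ξ‖ → χ (z + ψ ξ) = χ' (z + ψ ξ)) :
    discIntegral f χ ψ z - discIntegral f χ' ψ z = -Real.pi * (f z * (χ z - χ' z)) := by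
  have := FiniteDimensional.complete ℂ E
  have hint : IntegrableOn (fun ξ => dbar (fun ζ => χ (z + ψ ζ)) ξ / ξ * f (z + ψ ξ)) (ball 0 1) :=
    integrableOn_discIntegral hψ hχ fun ξ hξ hmem => (h ξ hξ).resolve_right fun ⟨_, hc, _⟩ =>
      notMem_tsupport_fderiv_of_eventuallyEq_const hc hmem
  have hint' : IntegrableOn (fun ξ => dbar (fun ζ => χ' (z + ψ ζ)) ξ / ξ * f (z + ψ ξ))
      (ball 0 1) :=
    integrableOn_discIntegral hψ hχ' fun ξ hξ hmem => (h ξ hξ).resolve_right fun ⟨_, _, hc⟩ =>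
      notMem_tsupport_fderiv_of_eventuallyEq_const hc hmem
  have hsmooth {ξ : ℂ} (hξ : ξ ∈ ball (0 : ℂ) 1) {η : E → ℂ} (hη : ContDiff ℝ 1 η) :
      ContDiffAt ℝ 1 (fun ζ => η (z + ψ ζ)) ξ :=
    contDiffAt_comp_add_of_analyticAt hη (hψ ξ (ball_subset_closedBall hξ)) z
  have hpompeiu := setIntegral_ball_mul_dbar_div (c := fun ξ => f (z + ψ ξ))
    (κ := fun ζ => χ (z + ψ ζ) - χ' (z + ψ ζ)) one_pos one_half_lt_one
    (fun ξ hξ => (hsmooth hξ hχ).sub (hsmooth hξ hχ')) (fun ξ hξ => ?_)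
    (fun ξ hξ hξ2 => sub_eq_zero.2 (houter ξ (ball_subset_closedBall hξ) hξ2))
  · simp only [hψ0, add_zero] at hpompeiu
    rw [discIntegral, discIntegral, ← integral_sub hint hint', ← hpompeiu]
    refine setIntegral_congr_fun measurableSet_ball fun ξ hξ => ?_
    simp only [dbar_sub ((hsmooth hξ hχ).differentiableAt one_ne_zero)
      ((hsmooth hξ hχ').differentiableAt one_ne_zero)]
    ring
  · have hξ' := ball_subset_closedBall hξ
    refine (h ξ hξ').imp (analyticAt_comp_add_of_mem_holomorphyDomain (hψ ξ hξ'))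
      fun ⟨c, hc, hc'⟩ => ?_
    have htendsto : Tendsto (fun ζ => z + ψ ζ) (𝓝 ξ) (𝓝 (z + ψ ξ)) :=
      (hψ ξ hξ').continuousAt.const_add z
    filter_upwards [htendsto hc, htendsto hc'] with ζ hζ hζ'
    exact sub_eq_zero.2 (hζ.trans hζ'.symm)

end DiscIntegral

section Cutoff

open Filter Topology

variable {E : Type*} [NormedAddCommGroup E] [NormedSpace ℝ E] {p : E} {R : ℝ} {K V₁ V₂ : Set E}

/-- Outside the compact set `K ∋ p`, the closed ball of radius `R` about `p` is split by the two
disjoint open sets `V₁` and `V₂`. -/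
structure IsSplitBall (p : E) (R : ℝ) (K V₁ V₂ : Set E) : Prop where
  isOpen_left : IsOpen V₁
  isOpen_right : IsOpen V₂
  disjoint : Disjoint V₁ V₂
  isCompact : IsCompact K
  center_mem : p ∈ K
  diff_subset : closedBall p R \ K ⊆ V₁ ∪ V₂

theorem notMem_of_infDist_pos {X : Type*} [PseudoMetricSpace X] {s : Set X} {x : X}
    (h : 0 < infDist x s) : x ∉ s :=
  fun hx => h.ne' (infDist_zero_of_mem hx)

omit [NormedSpace ℝ E] in
theorem IsSplitBall.symm (h : IsSplitBall p R K V₁ V₂) : IsSplitBall p R K V₂ V₁ :=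
  ⟨h.isOpen_right, h.isOpen_left, h.disjoint.symm, h.isCompact, h.center_mem,
    h.diff_subset.trans (Set.union_comm _ _).subset⟩

theorem IsSplitBall.mem_of_dist_lt_infDist (h : IsSplitBall p R K V₁ V₂) {a b : E}
    (ha : a ∈ ball p R) (hb : b ∈ ball p R) (hab : dist b a < infDist a K) (haV : a ∈ V₁) :
    b ∈ V₁ := by
  have hconn : IsPreconnected (ball p R ∩ ball a (infDist a K)) :=
    ((convex_ball p R).inter (convex_ball a _)).isPreconnected
  have hsub : ball p R ∩ ball a (infDist a K) ⊆ V₁ :=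
    hconn.subset_left_of_subset_union h.isOpen_left h.isOpen_right h.disjoint
      (fun x hx => h.diff_subset ⟨ball_subset_closedBall hx.1,
        Set.disjoint_left.1 disjoint_ball_infDist hx.2⟩)
      ⟨a, ⟨ha, mem_ball_self (dist_nonneg.trans_lt hab)⟩, haV⟩
  exact hsub ⟨hb, hab⟩

/-- `χ` is a `C¹` cutoff, equal to `1` on the `V₁`-side and to `0` on the `V₂`-side of the part of
the ball of radius `R` about `p` at distance more than `t` from `K`. -/
structure IsCutoff (p : E) (R : ℝ) (K V₁ V₂ : Set E) (t : ℝ) (χ : E → ℂ) : Prop where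
  contDiff : ContDiff ℝ 1 χ
  eventuallyEq_one : ∀ u ∈ ball p R, t < infDist u K → u ∈ V₁ → χ =ᶠ[𝓝 u] fun _ => 1
  eventuallyEq_zero : ∀ u ∈ ball p R, t < infDist u K → u ∈ V₂ → χ =ᶠ[𝓝 u] fun _ => 0

theorem IsSplitBall.exists_isCutoff [FiniteDimensional ℝ E] (h : IsSplitBall p R K V₁ V₂) {t : ℝ}
    (ht : 0 < t) : ∃ χ, IsCutoff p R K V₁ V₂ t χ := by
  have hclosed : IsClosed (closedBall p R ∩ {u | t ≤ infDist u K}) :=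
    isClosed_closedBall.inter (isClosed_le continuous_const (continuous_infDist_pt K))
  have hdisj : Disjoint (closedBall p R ∩ {u | t ≤ infDist u K} ∩ V₁ᶜ)
      (closedBall p R ∩ {u | t ≤ infDist u K} ∩ V₂ᶜ) :=
    Set.disjoint_left.2 fun u ⟨⟨hu, hut⟩, hu₁⟩ ⟨_, hu₂⟩ =>
      (h.diff_subset ⟨hu, notMem_of_infDist_pos (ht.trans_le hut)⟩).elim hu₁ hu₂
  obtain ⟨χ, hχ0, hχ1, -⟩ := exists_contMDiffMap_zero_one_of_isClosed (n := 1)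
    (modelWithCornersSelf ℝ E) (hclosed.inter h.isOpen_left.isClosed_compl)
    (hclosed.inter h.isOpen_right.isClosed_compl) hdisj
  have hfar {u : E} (hu : u ∈ ball p R) (hut : t < infDist u K) :
      ∀ᶠ v in 𝓝 u, v ∈ closedBall p R ∩ {u | t ≤ infDist u K} := by
    filter_upwards [isOpen_ball.mem_nhds hu,
      (isOpen_lt continuous_const (continuous_infDist_pt K)).mem_nhds hut] with v hv hvt
    exact ⟨ball_subset_closedBall hv, le_of_lt hvt⟩
  refine ⟨fun u => (χ u : ℂ), Complex.ofRealCLM.contDiff.comp χ.contMDiff.contDiff, ?_, ?_⟩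
  · intro u hu hut huV
    filter_upwards [hfar hu hut, h.isOpen_left.mem_nhds huV] with v hv hvV
    rw [hχ1 ⟨hv, Set.disjoint_left.1 h.disjoint hvV⟩, Pi.one_apply, Complex.ofReal_one]
  · intro u hu hut huV
    filter_upwards [hfar hu hut, h.isOpen_right.mem_nhds huV] with v hv hvV
    rw [hχ0 ⟨hv, Set.disjoint_right.1 h.disjoint hvV⟩, Pi.zero_apply, Complex.ofReal_zero]

theorem IsCutoff.exists_eventuallyEq_const {t : ℝ} {χ : E → ℂ} (hχ : IsCutoff p R K V₁ V₂ t χ)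
    (h : IsSplitBall p R K V₁ V₂) (ht : 0 ≤ t) {u : E} (hu : dist u p + t ≤ R)
    (hut : 2 * t < infDist u K) : ∃ c, ∀ v ∈ ball u t, χ =ᶠ[𝓝 v] fun _ => c := by
  have hball : ball u t ⊆ ball p R := ball_subset_ball' (by linarith)
  have hfar {v : E} (hv : v ∈ ball u t) : t < infDist v K := by
    have := infDist_le_infDist_add_dist (s := K) (x := u) (y := v)
    linarith [mem_ball'.1 hv]
  have hside {V V' : Set E} (h : IsSplitBall p R K V V') (huV : u ∈ V) {v : E}
      (hv : v ∈ ball u t) : v ∈ V := by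
    have hu' : u ∈ ball p R := hball (mem_ball_self (dist_nonneg.trans_lt hv))
    exact h.mem_of_dist_lt_infDist hu' (hball hv) (by linarith [mem_ball.1 hv]) huV
  rcases h.diff_subset ⟨mem_closedBall.2 (by linarith), notMem_of_infDist_pos (by linarith)⟩
    with huV | huV
  · exact ⟨1, fun v hv => hχ.eventuallyEq_one v (hball hv) (hfar hv) (hside h huV hv)⟩
  · exact ⟨0, fun v hv => hχ.eventuallyEq_zero v (hball hv) (hfar hv) (hside h.symm huV hv)⟩

end Cutoff

section SupportDisc

open Filter Topology

variable {E : Type*} [NormedAddCommGroup E] [NormedSpace ℂ E] {p z : E} {R ε t δ : ℝ}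
  {K V V' V₁ V₂ : Set E} {f χ : E → ℂ} {ψ ψ₁ ψ₂ : ℂ → E}

/-- `p + ψ` is a support curve in `V` at `p`, reparametrized over the closed unit disc, which stays
at distance `2ε` from `K` on the outer half of the disc. -/
structure IsSupportDisc (p : E) (R : ℝ) (K V : Set E) (ε : ℝ) (ψ : ℂ → E) : Prop where
  analyticOnNhd : AnalyticOnNhd ℂ ψ (closedBall 0 1)
  map_zero : ψ 0 = 0
  norm_lt : ∀ ξ ∈ closedBall (0 : ℂ) 1, ‖ψ ξ‖ < R / 2
  mem : ∀ ξ ∈ closedBall (0 : ℂ) 1, ξ ≠ 0 → p + ψ ξ ∈ V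
  le_infDist : ∀ ξ ∈ closedBall (0 : ℂ) 1, 1 / 2 ≤ ‖ξ‖ → 2 * ε ≤ infDist (p + ψ ξ) K

theorem IsSupportDisc.mono {ε' : ℝ} (h : IsSupportDisc p R K V ε ψ) (hε : ε' ≤ ε) :
    IsSupportDisc p R K V ε' ψ :=
  { h with le_infDist := fun ξ hξ hξ2 => by linarith [h.le_infDist ξ hξ hξ2] }

/-- On the translate by `z` of the disc `ψ`, the cutoff `χ` is constant near every point that is
on the outer half or outside the holomorphy domain of `f`, and stays so under translations of `χ`
by less than `δ`. -/
def IsAdmissibleTranslate (f χ : E → ℂ) (ψ : ℂ → E) (δ : ℝ) (z : E) : Prop :=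
  ∀ ξ ∈ closedBall (0 : ℂ) 1, (‖ξ‖ ≤ 1 / 2 ∧ z + ψ ξ ∈ holomorphyDomain f) ∨
    ∃ c, ∀ v ∈ ball (z + ψ ξ) δ, χ =ᶠ[𝓝 v] fun _ => c

theorem IsAdmissibleTranslate.mem_holomorphyDomain (h : IsAdmissibleTranslate f χ ψ δ z)
    (hδ : 0 < δ) {ξ : ℂ} (hξ : ξ ∈ closedBall (0 : ℂ) 1)
    (hχξ : z + ψ ξ ∈ tsupport (fderiv ℝ χ)) : z + ψ ξ ∈ holomorphyDomain f :=
  ((h ξ hξ).resolve_right fun ⟨_, hc⟩ =>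
    notMem_tsupport_fderiv_of_eventuallyEq_const (hc _ (mem_ball_self hδ)) hχξ).2

variable [FiniteDimensional ℂ E]

theorem IsAdmissibleTranslate.discIntegral_sub_translate (h : IsAdmissibleTranslate f χ ψ δ z)
    (hψ : AnalyticOnNhd ℂ ψ (closedBall 0 1)) (hψ0 : ψ 0 = 0) (hχ : ContDiff ℝ 1 χ) {v : E}
    (hv : ‖v‖ < δ) :
    discIntegral f χ ψ z - discIntegral f (fun u => χ (u - v)) ψ z =
      -Real.pi * (f z * (χ z - χ (z - v))) := by
  have hconst {u : E} {c : ℂ} (hc : ∀ w ∈ ball u δ, χ =ᶠ[𝓝 w] fun _ => c) :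
      χ =ᶠ[𝓝 u] (fun _ => c) ∧ (fun w => χ (w - v)) =ᶠ[𝓝 u] fun _ => c := by
    have htendsto : Tendsto (· - v) (𝓝 u) (𝓝 (u - v)) := (continuous_sub_right v).tendsto u
    exact ⟨hc u (mem_ball_self ((norm_nonneg v).trans_lt hv)),
      htendsto (hc (u - v) (by simpa [dist_eq_norm] using hv))⟩
  refine discIntegral_sub_discIntegral hψ hψ0 hχ (hχ.comp (contDiff_id.sub contDiff_const))
    (fun ξ hξ => (h ξ hξ).imp And.right fun ⟨c, hc⟩ => ⟨c, hconst hc⟩) fun ξ hξ hξ2 => ?_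
  obtain ⟨c, hc⟩ := (h ξ hξ).resolve_left fun hin => absurd hin.1 (not_le.2 hξ2)
  exact (hconst hc).1.eq_of_nhds.trans (hconst hc).2.eq_of_nhds.symm

/-- The two integrals react in the same way to a change of cutoff, so in their difference the
cutoff may be translated along with the base point. -/
theorem differentiableAt_discIntegral_sub_discIntegral
    (hψ₁ : AnalyticOnNhd ℂ ψ₁ (closedBall 0 1)) (hψ₁0 : ψ₁ 0 = 0)
    (hψ₂ : AnalyticOnNhd ℂ ψ₂ (closedBall 0 1)) (hψ₂0 : ψ₂ 0 = 0) (hχ : ContDiff ℝ 1 χ)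
    (hδ : 0 < δ) (h₁ : ∀ᶠ w in 𝓝 z, IsAdmissibleTranslate f χ ψ₁ δ w)
    (h₂ : ∀ᶠ w in 𝓝 z, IsAdmissibleTranslate f χ ψ₂ δ w) :
    DifferentiableAt ℂ (fun w => discIntegral f χ ψ₁ w - discIntegral f χ ψ₂ w) z := by
  have heq : (fun w => discIntegral f χ ψ₁ w - discIntegral f χ ψ₂ w) =ᶠ[𝓝 z]
      fun w => discIntegral f (fun u => χ (u - (w - z))) ψ₁ w -
        discIntegral f (fun u => χ (u - (w - z))) ψ₂ w := by
    filter_upwards [h₁, h₂, ball_mem_nhds z hδ] with w hw₁ hw₂ hw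
    have hwz : ‖w - z‖ < δ := mem_ball_iff_norm.1 hw
    linear_combination hw₁.discIntegral_sub_translate hψ₁ hψ₁0 hχ hwz -
      hw₂.discIntegral_sub_translate hψ₂ hψ₂0 hχ hwz
  have hdiff {ψ : ℂ → E} (hψ : AnalyticOnNhd ℂ ψ (closedBall 0 1))
      (h : IsAdmissibleTranslate f χ ψ δ z) :
      DifferentiableAt ℂ (fun w => discIntegral f (fun u => χ (u - (w - z))) ψ w) z :=
    differentiableAt_discIntegral_translate hψ hχ fun _ => h.mem_holomorphyDomain hδ
  exact ((hdiff hψ₁ h₁.self_of_nhds).sub (hdiff hψ₂ h₂.self_of_nhds)).congr_of_eventuallyEq heq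

omit [FiniteDimensional ℂ E] in
theorem IsSupportDisc.dist_add_lt (h : IsSupportDisc p R K V ε ψ) {ξ : ℂ}
    (hξ : ξ ∈ closedBall (0 : ℂ) 1) : dist (z + ψ ξ) p < dist z p + R / 2 := by
  rw [dist_eq_norm, dist_eq_norm, add_sub_right_comm]
  exact (norm_add_le _ _).trans_lt (add_lt_add_right (h.norm_lt ξ hξ) _)

omit [FiniteDimensional ℂ E] in
theorem IsSupportDisc.lt_infDist_add (h : IsSupportDisc p R K V ε ψ) (hz : z ∈ ball p ε) {ξ : ℂ}
    (hξ : ξ ∈ closedBall (0 : ℂ) 1) (hξ2 : 1 / 2 ≤ ‖ξ‖) : ε < infDist (z + ψ ξ) K := by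
  have hle := infDist_le_infDist_add_dist (s := K) (x := p + ψ ξ) (y := z + ψ ξ)
  rw [dist_add_right] at hle
  linarith [h.le_infDist ξ hξ hξ2, mem_ball'.1 hz]

omit [FiniteDimensional ℂ E] in
theorem IsSupportDisc.isAdmissibleTranslate (h : IsSupportDisc p R K V ε ψ)
    (hB : IsSplitBall p R K V₁ V₂) (hχ : IsCutoff p R K V₁ V₂ t χ) (hεR : ε ≤ R / 4) (ht : 0 < t)
    (htε : 3 * t ≤ ε) (hf : ∀ u, infDist u K < 3 * t → u ∈ holomorphyDomain f)
    (hz : z ∈ ball p ε) : IsAdmissibleTranslate f χ ψ t z := by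
  intro ξ hξ
  by_cases hfar : 2 * t < infDist (z + ψ ξ) K
  · refine .inr (hχ.exists_eventuallyEq_const hB ht.le ?_ hfar)
    linarith [h.dist_add_lt (z := z) hξ, mem_ball.1 hz]
  · refine .inl ⟨?_, hf _ (by linarith)⟩
    by_contra! hξ2
    linarith [h.lt_infDist_add hz hξ hξ2.le]

/-- Near `p` the translated disc meets only one side of `K`, where the cutoff is constant. -/
theorem IsSupportDisc.discIntegral_eq (h : IsSupportDisc p R K V ε ψ)
    (hB : IsSplitBall p R K V V') (hχ : ContDiff ℝ 1 χ) {c : ℂ}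
    (hχV : ∀ u ∈ ball p R, t < infDist u K → u ∈ V → χ =ᶠ[𝓝 u] fun _ => c)
    (hεR : ε ≤ R / 4) (ht : 0 < t) (htε : 3 * t ≤ ε)
    (hf : ∀ u, infDist u K < 3 * t → u ∈ holomorphyDomain f) (hz : z ∈ ball p t) :
    discIntegral f χ ψ z = -Real.pi * (f z * (χ z - c)) := by
  rw [mem_ball] at hz
  have hconst {ξ : ℂ} (hξ : ξ ∈ closedBall (0 : ℂ) 1) (hfar : 2 * t < infDist (z + ψ ξ) K) :
      χ =ᶠ[𝓝 (z + ψ ξ)] fun _ => c := by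
    have hξ0 : ξ ≠ 0 := by
      rintro rfl
      rw [h.map_zero, add_zero] at hfar
      linarith [infDist_le_dist_of_mem hB.center_mem (x := z)]
    have hdist : dist (z + ψ ξ) (p + ψ ξ) < t := by rwa [dist_add_right]
    have hle := infDist_le_infDist_add_dist (s := K) (x := z + ψ ξ) (y := p + ψ ξ)
    have hmem : z + ψ ξ ∈ ball p R := mem_ball.2 (by linarith [h.dist_add_lt (z := z) hξ])
    have hmem' : p + ψ ξ ∈ ball p R := mem_ball.2 (by
      linarith [h.dist_add_lt (z := p) hξ, dist_self p, dist_nonneg (x := z) (y := p)])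
    exact hχV _ hmem (by linarith)
      (hB.mem_of_dist_lt_infDist hmem' hmem (by linarith) (h.mem ξ hξ hξ0))
  have hdiff := discIntegral_sub_discIntegral (f := f) (χ := χ) (χ' := fun _ => c) (z := z)
    h.analyticOnNhd h.map_zero hχ contDiff_const (fun ξ hξ => ?_) fun ξ hξ hξ2 => ?_
  · rwa [discIntegral_const, sub_zero] at hdiff
  · by_cases hfar : 2 * t < infDist (z + ψ ξ) K
    · exact .inr ⟨c, hconst hξ hfar, .rfl⟩
    · exact .inl (hf _ (by linarith))
  · have hz' : z ∈ ball p ε := mem_ball.2 (by linarith)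
    exact (hconst hξ (by linarith [h.lt_infDist_add hz' hξ hξ2.le])).eq_of_nhds

theorem exists_differentiableOn_ball_eventuallyEq (h₁ : IsSupportDisc p R K V₁ ε ψ₁)
    (h₂ : IsSupportDisc p R K V₂ ε ψ₂) (hB : IsSplitBall p R K V₁ V₂) (hεR : ε ≤ R / 4)
    (hε : 0 < ε) (hf : K ⊆ holomorphyDomain f) :
    ∃ F, DifferentiableOn ℂ F (ball p ε) ∧ F =ᶠ[𝓝 p] f := by
  have := FiniteDimensional.complexToReal E
  obtain ⟨δ, hδ, hδf⟩ := hB.isCompact.exists_thickening_subset_open (isOpen_holomorphyDomain f) hf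
  obtain ⟨t, ht, htmin⟩ : ∃ t > 0, 3 * t ≤ min δ ε :=
    ⟨min δ ε / 3, by positivity, (mul_div_cancel₀ _ three_ne_zero).le⟩
  have htε : 3 * t ≤ ε := htmin.trans (min_le_right _ _)
  have htδ : 3 * t ≤ δ := htmin.trans (min_le_left _ _)
  have hft : ∀ u, infDist u K < 3 * t → u ∈ holomorphyDomain f := fun u hu =>
    hδf ((mem_thickening_iff_infDist_lt ⟨p, hB.center_mem⟩).2 (hu.trans_le htδ))
  obtain ⟨χ, hχ⟩ := hB.exists_isCutoff ht
  refine ⟨fun z => (discIntegral f χ ψ₁ z - discIntegral f χ ψ₂ z) * (Real.pi : ℂ)⁻¹,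
    fun z hz => ?_, ?_⟩
  · have hnear := isOpen_ball.mem_nhds hz
    refine ((differentiableAt_discIntegral_sub_discIntegral h₁.analyticOnNhd h₁.map_zero
      h₂.analyticOnNhd h₂.map_zero hχ.contDiff ht ?_ ?_).mul_const _).differentiableWithinAt
    · filter_upwards [hnear] with w hw using h₁.isAdmissibleTranslate hB hχ hεR ht htε hft hw
    · filter_upwards [hnear] with w hw using h₂.isAdmissibleTranslate hB hχ hεR ht htε hft hw
  · filter_upwards [ball_mem_nhds p ht] with z hz
    rw [h₁.discIntegral_eq hB hχ.contDiff hχ.eventuallyEq_one hεR ht htε hft hz,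
      h₂.discIntegral_eq hB.symm hχ.contDiff hχ.eventuallyEq_zero hεR ht htε hft hz]
    have hpi : (Real.pi : ℂ) ≠ 0 := Complex.ofReal_ne_zero.2 Real.pi_ne_zero
    field_simp
    ring

end SupportDisc

section IdentityTheorem

open Filter Topology

variable {E : Type*} [NormedAddCommGroup E] [NormedSpace ℂ E] {G : E → ℂ} {D S : Set E} {p : E}

theorem eqOn_zero_ball_of_eventuallyEq_zero {δ : ℝ} (hG : DifferentiableOn ℂ G (ball p δ)) {a : E}
    (ha : a ∈ ball p δ) (hGa : G =ᶠ[𝓝 a] 0) : Set.EqOn G 0 (ball p δ) := by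
  intro w hw
  set line : ℂ → E := fun s => a + s • (w - a)
  have hline : Differentiable ℂ line := (differentiable_id.smul_const (w - a)).const_add a
  have hline0 : line 0 = a := by simp [line]
  have hline1 : line 1 = w := by simp [line]
  have hconvex : Convex ℝ (line ⁻¹' ball p δ) :=
    ((convex_ball p δ).translate_preimage_right a).linear_preimage
      ((LinearMap.toSpanSingleton ℂ E (w - a)).restrictScalars ℝ)
  have hanalytic : AnalyticOnNhd ℂ (G ∘ line) (line ⁻¹' ball p δ) :=
    (hG.comp hline.differentiableOn fun _ => id).analyticOnNhd
      (isOpen_ball.preimage hline.continuous)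
  have htendsto : Tendsto line (𝓝 0) (𝓝 a) := hline0 ▸ hline.continuous.tendsto 0
  have := hanalytic.eqOn_zero_of_preconnected_of_eventuallyEq_zero hconvex.isPreconnected
    (Set.mem_preimage.2 (hline0.symm ▸ ha)) (htendsto.eventually hGa)
    (Set.mem_preimage.2 (hline1.symm ▸ hw))
  rwa [Function.comp_apply, hline1] at this

theorem eqOn_zero_of_isPreconnected_of_eventuallyEq_zero (hD : IsOpen D)
    (hG : DifferentiableOn ℂ G D) (hS : IsPreconnected S) (hSD : S ⊆ D) (hp : p ∈ S)
    (hGp : G =ᶠ[𝓝 p] 0) : Set.EqOn G 0 S := by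
  have hopen : IsOpen {z | G =ᶠ[𝓝 z] 0} :=
    isOpen_iff_mem_nhds.2 fun z hz => eventually_eventually_nhds.2 hz
  have hsub : S ⊆ {z | G =ᶠ[𝓝 z] 0} := by
    refine hS.subset_of_closure_inter_subset hopen ⟨p, hp, hGp⟩ fun z ⟨hzcl, hzS⟩ => ?_
    obtain ⟨δ, hδ, hball⟩ := isOpen_iff.1 hD z (hSD hzS)
    obtain ⟨a, hGa, ha⟩ := mem_closure_iff.1 hzcl δ hδ
    exact (eqOn_zero_ball_of_eventuallyEq_zero (hG.mono hball) (mem_ball'.2 ha)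
      hGa).eventuallyEq_of_mem (ball_mem_nhds z hδ)
  exact fun z hz => (hsub hz).self_of_nhds

end IdentityTheorem

section TwoSides

open Filter Topology

variable {E : Type*} [NormedAddCommGroup E] [NormedSpace ℂ E] {p : E} {φ φ₁ φ₂ : ℂ → E}
  {K U V V₁ V₂ : Set E}

/-- `φ` is a nonconstant holomorphic disc centred at `p` and contained in `V ∪ {p}`. -/
structure IsOneSidedDisc (p : E) (V : Set E) (φ : ℂ → E) : Prop where
  differentiableOn : DifferentiableOn ℂ φ (ball 0 1)
  map_zero : φ 0 = p
  exists_ne : ∃ ξ ∈ ball (0 : ℂ) 1, φ ξ ≠ p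
  mem_of_ne : ∀ ξ ∈ ball (0 : ℂ) 1, φ ξ ≠ p → φ ξ ∈ V

theorem exists_pos_forall_le_infDist {X Y : Type*} [TopologicalSpace X] [PseudoMetricSpace Y]
    {s : Set X} {K : Set Y} {g : X → Y} (hs : IsCompact s) (hK : IsClosed K) (hne : K.Nonempty)
    (hg : ContinuousOn g s) (hgK : ∀ x ∈ s, g x ∉ K) : ∃ ε > 0, ∀ x ∈ s, ε ≤ infDist (g x) K :=
  hs.exists_forall_le' ((continuous_infDist_pt K).comp_continuousOn hg) fun x hx =>
    (hK.notMem_iff_infDist_pos hne).1 (hgK x hx)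

variable [CompleteSpace E]

theorem IsOneSidedDisc.eventually_ne (h : IsOneSidedDisc p V φ) : ∀ᶠ ξ in 𝓝 0, ξ ≠ 0 → φ ξ ≠ p := by
  have h0 : (0 : ℂ) ∈ ball (0 : ℂ) 1 := mem_ball_self one_pos
  have hanalytic : AnalyticOnNhd ℂ φ (ball 0 1) := h.differentiableOn.analyticOnNhd isOpen_ball
  refine eventually_nhdsWithin_iff.1 <|
    ((hanalytic 0 h0).eventually_eq_or_eventually_ne analyticAt_const).resolve_left fun heq => ?_
  obtain ⟨ξ, hξ, hne⟩ := h.exists_ne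
  exact hne (hanalytic.eqOn_of_preconnected_of_eventuallyEq analyticOnNhd_const
    (convex_ball (0 : ℂ) 1).isPreconnected h0 heq hξ)

theorem IsOneSidedDisc.exists_isSupportDisc (h : IsOneSidedDisc p V φ) (hK : IsClosed K)
    (hp : p ∈ K) (hKV : Disjoint K V) {R : ℝ} (hR : 0 < R) :
    ∃ ε > 0, ∃ ψ, IsSupportDisc p R K V ε ψ := by
  have h0 : (0 : ℂ) ∈ ball (0 : ℂ) 1 := mem_ball_self one_pos
  have hnear : ∀ᶠ ξ in 𝓝 0, φ ξ ∈ ball p (R / 2) :=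
    (h.differentiableOn.continuousOn.continuousAt (isOpen_ball.mem_nhds h0)).eventually
      (isOpen_ball.mem_nhds (by simp [h.map_zero, hR]))
  obtain ⟨r, hr, hsub⟩ := nhds_basis_closedBall.mem_iff.1
    ((h.eventually_ne.and hnear).and (ball_mem_nhds (0 : ℂ) one_pos))
  have hscale {ξ : ℂ} (hξ : ξ ∈ closedBall (0 : ℂ) 1) : (r : ℂ) * ξ ∈ closedBall (0 : ℂ) r := by
    simpa [abs_of_pos hr] using mul_le_of_le_one_right hr.le (mem_closedBall_zero_iff.1 hξ)
  have hanalytic : AnalyticOnNhd ℂ (fun ξ => φ (r * ξ) - p) (closedBall 0 1) := fun ξ hξ =>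
    ((h.differentiableOn.analyticOnNhd isOpen_ball _ (hsub (hscale hξ)).2).comp_of_eq
      (analyticAt_const.mul analyticAt_id) rfl).sub analyticAt_const
  have hV {ξ : ℂ} (hξ : ξ ∈ closedBall (0 : ℂ) 1) (hξ0 : ξ ≠ 0) : φ (r * ξ) ∈ V :=
    h.mem_of_ne _ (hsub (hscale hξ)).2 <| (hsub (hscale hξ)).1.1 <|
      mul_ne_zero (Complex.ofReal_ne_zero.2 hr.ne') hξ0
  have houter : IsCompact (closedBall (0 : ℂ) 1 ∩ {ξ | 1 / 2 ≤ ‖ξ‖}) :=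
    (isCompact_closedBall 0 1).inter_right (isClosed_le continuous_const continuous_norm)
  obtain ⟨ε, hε, hεle⟩ := exists_pos_forall_le_infDist houter hK ⟨p, hp⟩
    (g := fun ξ => p + (φ (r * ξ) - p))
    (continuousOn_const.add (hanalytic.continuousOn.mono Set.inter_subset_left)) (by
      rintro ξ ⟨hξ, hξ2⟩
      rw [add_sub_cancel]
      refine Set.disjoint_right.1 hKV (hV hξ ?_)
      rintro rfl
      norm_num at hξ2)
  refine ⟨ε / 2, half_pos hε, fun ξ => φ (r * ξ) - p, hanalytic, by simp [h.map_zero],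
    fun ξ hξ => ?_, fun ξ hξ hξ0 => ?_, fun ξ hξ hξ2 => ?_⟩
  · exact mem_ball_iff_norm.1 (hsub (hscale hξ)).1.2
  · rw [add_sub_cancel]
    exact hV hξ hξ0
  · rw [mul_div_cancel₀ _ two_ne_zero]
    exact hεle ξ ⟨hξ, hξ2⟩

omit [CompleteSpace E] in
theorem exists_ball_extension_germ [FiniteDimensional ℂ E] (hU : U ∈ 𝓝 p) (hV₁ : IsOpen V₁)
    (hV₂ : IsOpen V₂) (hV : Disjoint V₁ V₂) (hp : p ∉ V₁ ∪ V₂) (hφ₁ : IsOneSidedDisc p V₁ φ₁)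
    (hφ₂ : IsOneSidedDisc p V₂ φ₂) :
    ∃ ε > 0, ∀ f : E → ℂ, U \ (V₁ ∪ V₂) ⊆ holomorphyDomain f →
      ∃ F, DifferentiableOn ℂ F (ball p ε) ∧ F =ᶠ[𝓝 p] f := by
  have := FiniteDimensional.complete ℂ E
  have := FiniteDimensional.proper ℂ E
  obtain ⟨R, hR, hRU⟩ := nhds_basis_closedBall.mem_iff.1 hU
  have hcompact : IsCompact (closedBall p R \ (V₁ ∪ V₂)) :=
    (isCompact_closedBall p R).diff (hV₁.union hV₂)
  have hpK : p ∈ closedBall p R \ (V₁ ∪ V₂) := ⟨mem_closedBall_self hR.le, hp⟩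
  have hB : IsSplitBall p R (closedBall p R \ (V₁ ∪ V₂)) V₁ V₂ :=
    ⟨hV₁, hV₂, hV, hcompact, hpK,
      (Set.sdiff_sdiff_right_self _ _).subset.trans Set.inter_subset_right⟩
  obtain ⟨ε₁, hε₁, ψ₁, hψ₁⟩ := hφ₁.exists_isSupportDisc hcompact.isClosed hpK
    (Set.disjoint_sdiff_left.mono_right Set.subset_union_left) hR
  obtain ⟨ε₂, hε₂, ψ₂, hψ₂⟩ := hφ₂.exists_isSupportDisc hcompact.isClosed hpK
    (Set.disjoint_sdiff_left.mono_right Set.subset_union_right) hR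
  refine ⟨min (min ε₁ ε₂) (R / 4), by positivity, fun f hf => ?_⟩
  exact exists_differentiableOn_ball_eventuallyEq
    (hψ₁.mono ((min_le_left _ _).trans (min_le_left _ _)))
    (hψ₂.mono ((min_le_left _ _).trans (min_le_right _ _))) hB (min_le_right _ _) (by positivity)
    ((Set.sdiff_subset_sdiff_left hRU).trans hf)

end TwoSides

section LocalExtension

open Filter Topology

variable {E : Type*} [NormedAddCommGroup E] [NormedSpace ℂ E] [FiniteDimensional ℂ E]

theorem holomorphic_extension_to_fixed_neighborhood_general {H V₁ V₂ : Set E} {p : E} {ρ : E → ℝ}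
    {φ₁ φ₂ : ℂ → E} (hρ : AnalyticAt ℝ ρ p) (hH : ∀ᶠ z in 𝓝 p, z ∈ H ↔ ρ z = 0)
    (hV₁ : IsOpen V₁) (hV₂ : IsOpen V₂) (hV : Disjoint V₁ V₂) (hHV : V₁ ∪ V₂ ∪ H ∈ 𝓝 p)
    (hp : p ∈ H \ (V₁ ∪ V₂)) (hφ₁ : IsOneSidedDisc p V₁ φ₁) (hφ₂ : IsOneSidedDisc p V₂ φ₂) :
    ∃ Ω : Set E, IsOpen Ω ∧ p ∈ Ω ∧ ∀ W : Set E, IsOpen W → H ⊆ W →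
      ∀ f : E → ℂ, DifferentiableOn ℂ f W →
        ∃ F : E → ℂ, DifferentiableOn ℂ F Ω ∧ ∀ z ∈ Ω ∩ H, F z = f z := by
  obtain ⟨ε, hε, hext⟩ := exists_ball_extension_germ hHV hV₁ hV₂ hV hp.2 hφ₁ hφ₂
  have : FiniteDimensional ℝ E := .complexToReal E
  obtain ⟨N, hN, hconn⟩ := exists_isPreconnected_of_analyticAt_eq_zero hρ
    (hH.self_of_nhds.1 hp.1) (inter_mem (ball_mem_nhds p hε) hH)
  refine ⟨interior (N ∩ ball p ε ∩ {z | z ∈ H ↔ ρ z = 0}), isOpen_interior,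
    mem_interior_iff_mem_nhds.2 (inter_mem (inter_mem hN (ball_mem_nhds p hε)) hH), ?_⟩
  intro W hW hHW f hf
  have hWf : W ⊆ holomorphyDomain f :=
    interior_maximal (fun z hz => hf.differentiableAt (hW.mem_nhds hz)) hW
  obtain ⟨F, hF, hFf⟩ := hext f
    (Set.sdiff_subset_iff.2 (Set.union_subset_union_right _ (hHW.trans hWf)))
  refine ⟨F, hF.mono fun z hz => (interior_subset hz).1.2, fun z ⟨hzΩ, hzH⟩ => ?_⟩
  obtain ⟨⟨hzN, -⟩, hzρ⟩ := interior_subset hzΩ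
  obtain ⟨S, hS, hpS, hzS, hSH⟩ := hconn z hzN (hzρ.1 hzH)
  refine sub_eq_zero.1 (eqOn_zero_of_isPreconnected_of_eventuallyEq_zero (isOpen_ball.inter hW)
    ((hF.mono Set.inter_subset_left).sub (hf.mono Set.inter_subset_right)) hS ?_ hpS
    (hFf.sub_eq) hzS)
  exact fun w hw => ⟨(hSH hw).1.1, hHW ((hSH hw).1.2.2 (hSH hw).2)⟩

end LocalExtension

section RealAnalyticHypersurface

theorem isOpen_sdiff_connectedComponentIn {X : Type*} [TopologicalSpace X]
    [LocallyConnectedSpace X] {O : Set X} (hO : IsOpen O) (x : X) :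
    IsOpen (O \ connectedComponentIn O x) := by
  refine isOpen_iff_mem_nhds.2 fun y ⟨hy, hyx⟩ => ?_
  filter_upwards [hO.connectedComponentIn.mem_nhds (mem_connectedComponentIn hy)] with w hw
  refine ⟨connectedComponentIn_subset _ _ hw, fun hwx => hyx ?_⟩
  rw [connectedComponentIn_eq hwx, ← connectedComponentIn_eq hw]
  exact mem_connectedComponentIn hy

variable {n : ℕ} {U H V C : Set (EuclideanSpace ℂ (Fin n))} {p : EuclideanSpace ℂ (Fin n)}

theorem IsRealAnalyticHypersurface.isOpen_sdiff (hH : IsRealAnalyticHypersurface U H) :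
    IsOpen (U \ H) := by
  obtain ⟨hU, -, ρ, hρ, rfl, -⟩ := hH
  have hne : U \ {z | z ∈ U ∧ ρ z = 0} = U ∩ ρ ⁻¹' {0}ᶜ := by
    ext z
    simp +contextual
  rw [hne]
  exact hρ.continuousOn.isOpen_inter_preimage hU isOpen_compl_singleton

theorem IsSupportCurve.exists_isOneSidedDisc (hC : IsSupportCurve U H p C) (hCV : C \ {p} ⊆ V) :
    ∃ φ, IsOneSidedDisc p V φ := by
  obtain ⟨φ, hφ, -, ⟨a, ha, b, hb, hab⟩, h0, rfl, -⟩ := hC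
  refine ⟨φ, hφ, h0, ?_, fun ξ hξ hne => hCV ⟨Set.mem_image_of_mem φ hξ, hne⟩⟩
  by_contra! hconst
  exact hab ((hconst a ha).trans (hconst b hb).symm)

theorem CurveSupportedFromTwoSides.exists_isOneSidedDisc (h : CurveSupportedFromTwoSides U H p)
    (hUH : IsOpen (U \ H)) :
    ∃ V₁ V₂, IsOpen V₁ ∧ IsOpen V₂ ∧ Disjoint V₁ V₂ ∧ V₁ ∪ V₂ = U \ H ∧
      (∃ φ₁, IsOneSidedDisc p V₁ φ₁) ∧ ∃ φ₂, IsOneSidedDisc p V₂ φ₂ := by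
  obtain ⟨C₁, C₂, _, _, hC₁, hC₂, ⟨x₁, -, rfl⟩, ⟨x₂, -, rfl⟩, hne, hCV₁, hCV₂⟩ := h
  have hsub : connectedComponentIn (U \ H) x₂ ⊆ (U \ H) \ connectedComponentIn (U \ H) x₁ :=
    fun z hz => ⟨connectedComponentIn_subset _ _ hz, fun hz₁ =>
      hne ((connectedComponentIn_eq hz₁).trans (connectedComponentIn_eq hz).symm)⟩
  exact ⟨connectedComponentIn (U \ H) x₁, (U \ H) \ connectedComponentIn (U \ H) x₁,
    hUH.connectedComponentIn, isOpen_sdiff_connectedComponentIn hUH x₁, Set.disjoint_sdiff_right,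
    Set.union_sdiff_cancel (connectedComponentIn_subset _ _), hC₁.exists_isOneSidedDisc hCV₁,
    hC₂.exists_isOneSidedDisc (hCV₂.trans hsub)⟩

end RealAnalyticHypersurface

theorem holomorphic_extension_to_fixed_neighborhood {n : ℕ} (hn : 2 ≤ n)
    (U H : Set (EuclideanSpace ℂ (Fin n)))
    (hH : IsRealAnalyticHypersurface U H)
    (p : EuclideanSpace ℂ (Fin n)) (hp : p ∈ H)
    (h2 : CurveSupportedFromTwoSides U H p) :
    ∃ Ω : Set (EuclideanSpace ℂ (Fin n)), IsOpen Ω ∧ p ∈ Ω ∧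
      ∀ W : Set (EuclideanSpace ℂ (Fin n)), IsOpen W → H ⊆ W →
        ∀ f : EuclideanSpace ℂ (Fin n) → ℂ, DifferentiableOn ℂ f W →
          ∃ F : EuclideanSpace ℂ (Fin n) → ℂ, DifferentiableOn ℂ F Ω ∧
            ∀ z ∈ Ω ∩ H, F z = f z := by
  obtain ⟨V₁, V₂, hV₁, hV₂, hV, hUH, ⟨φ₁, hφ₁⟩, φ₂, hφ₂⟩ :=
    h2.exists_isOneSidedDisc hH.isOpen_sdiff
  obtain ⟨hU, -, ρ, hρ, rfl, -⟩ := hH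
  have hUp := hU.mem_nhds hp.1
  refine holomorphic_extension_to_fixed_neighborhood_general (hρ p hp.1) ?_ hV₁ hV₂ hV ?_
    ⟨hp, hUH ▸ fun hpUH => hpUH.2 hp⟩ hφ₁ hφ₂
  · exact Filter.mem_of_superset hUp fun z hz => and_iff_right hz
  · rw [hUH, Set.sdiff_union_of_subset fun z hz => hz.1]
    exact hUp
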